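/- arXiv:1711.04649 — 2 statements merged into one kernel-verified Lean document; each statement's English description precedes it below -/
import Mathlib

section
/- Let K be a number field and Γ₀ a subgroup of the multiplicative group K* of finite rank r. Let Γ = Γ₀ × Γ₀ and let a, b ∈ K*. Then the equation a·x + b·y = 1 has at most 2^{8(2r+2)} solutions with (x,y) ∈ Γ. -/
open NumberField IsDedekindDomain MvPolynomial
open scoped Classical nonZeroDivisors

set_option synthInstance.maxHeartbeats 1000000
set_option maxHeartbeats 1000000

noncomputable section

/-- The projective line over `K`. -/
abbrev P1 (K : Type*) [Field K] := Projectivization K (Fin 2 → K)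

variable {K : Type*} [Field K] [NumberField K]

/-- The additive `v`-adic valuation (order) of `x ∈ K`, with junk value `0` at `x = 0`,
normalized so that it is surjective onto `ℤ`. -/
def ordAt (v : HeightOneSpectrum (𝓞 K)) (x : K) : ℤ :=
  if hx : x = 0 then 0
  else - Multiplicative.toAdd (WithZero.unzero ((v.valuation K).ne_zero_iff.mpr hx))

/-- `min (v(x), v(y))` for a pair of coordinates, not both zero. -/
def minOrd (v : HeightOneSpectrum (𝓞 K)) (x y : K) : ℤ :=
  if x = 0 then ordAt v y else if y = 0 then ordAt v x else min (ordAt v x) (ordAt v y)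

/-- The `v`-adic logarithmic distance between two points of `ℙ¹(K)`:
`δ_v(P,Q) = v(x₁y₂ - x₂y₁) - min(v x₁, v y₁) - min(v x₂, v y₂)`, with value `⊤` when `P = Q`
(it is independent of the choice of homogeneous coordinates, so we compute it on the chosen
representatives). -/
def logDist (v : HeightOneSpectrum (𝓞 K)) (P Q : P1 K) : WithTop ℤ :=
  if P = Q then ⊤
  else ((ordAt v (P.rep 0 * Q.rep 1 - P.rep 1 * Q.rep 0)
        - minOrd v (P.rep 0) (P.rep 1) - minOrd v (Q.rep 0) (Q.rep 1) : ℤ) : WithTop ℤ)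

/-- An endomorphism of `ℙ¹` of degree `d` defined over `K`, given by a pair of homogeneous
forms of degree `d` with no common zero over the algebraic closure, together with the induced
self-map of `ℙ¹(K)`. -/
structure P1Map (K : Type*) [Field K] (d : ℕ) where
  toFun : P1 K → P1 K
  F : MvPolynomial (Fin 2) K
  G : MvPolynomial (Fin 2) K
  homF : F.IsHomogeneous d
  homG : G.IsHomogeneous d
  coprime : ∀ x y : AlgebraicClosure K,
    aeval ![x, y] F = 0 → aeval ![x, y] G = 0 → x = 0 ∧ y = 0
  compat : ∀ (x y : K) (hxy : ![x, y] ≠ 0)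
    (h : ![eval ![x, y] F, eval ![x, y] G] ≠ 0),
    toFun (Projectivization.mk K ![x, y] hxy) =
      Projectivization.mk K ![eval ![x, y] F, eval ![x, y] G] h

variable {d : ℕ}

/-- `φ` has good reduction at the finite place `v`: some representing pair of forms has
coefficients in the valuation ring at `v`, not all in the maximal ideal, and the reductions
of the two forms modulo `v` have no common zero in `ℙ¹` of the algebraic closure of the
residue field. -/
def GoodReductionAt (φ : P1Map K d) (v : HeightOneSpectrum (𝓞 K)) : Prop :=
  ∃ c : K, c ≠ 0 ∧
    ∃ F₀ G₀ : MvPolynomial (Fin 2) (v.valuation (K := K)).valuationSubring,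
      MvPolynomial.map ((v.valuation (K := K)).valuationSubring.subtype) F₀ = C c * φ.F ∧
      MvPolynomial.map ((v.valuation (K := K)).valuationSubring.subtype) G₀ = C c * φ.G ∧
      ((∃ m, F₀.coeff m ∉ IsLocalRing.maximalIdeal (v.valuation (K := K)).valuationSubring) ∨
        (∃ m, G₀.coeff m ∉ IsLocalRing.maximalIdeal (v.valuation (K := K)).valuationSubring)) ∧
      ∀ x y : AlgebraicClosure
          (IsLocalRing.ResidueField (v.valuation (K := K)).valuationSubring),
        eval ![x, y] (MvPolynomial.map
          ((algebraMap (IsLocalRing.ResidueField (v.valuation (K := K)).valuationSubring)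
              (AlgebraicClosure _)).comp
            (IsLocalRing.residue _)) F₀) = 0 →
        eval ![x, y] (MvPolynomial.map
          ((algebraMap (IsLocalRing.ResidueField (v.valuation (K := K)).valuationSubring)
              (AlgebraicClosure _)).comp
            (IsLocalRing.residue _)) G₀) = 0 →
        x = 0 ∧ y = 0

/-- `φ` has good reduction outside `S`, where `S` consists of all archimedean places together
with the finite places in `T`. -/
def GoodReductionOutside (φ : P1Map K d) (T : Finset (HeightOneSpectrum (𝓞 K))) : Prop :=
  ∀ v ∉ T, GoodReductionAt φ v

/-- `P` is a periodic point of `φ`. -/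
def IsPeriodicPoint (φ : P1Map K d) (P : P1 K) : Prop :=
  ∃ n, 0 < n ∧ φ.toFun^[n] P = P

/-- `P` is a preperiodic point of `φ`. -/
def IsPreperiodicPoint (φ : P1Map K d) (P : P1 K) : Prop :=
  ∃ m, IsPeriodicPoint φ (φ.toFun^[m] P)

/-- `P` is a tail point of `φ`: preperiodic but not periodic. -/
def IsTailPoint (φ : P1Map K d) (P : P1 K) : Prop :=
  IsPreperiodicPoint φ P ∧ ¬ IsPeriodicPoint φ P

/-- The set `Tail(φ,K,P)` of `K`-rational tail points of `P`: non-periodic points having `P`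
in their forward orbit. -/
def TailOf (φ : P1Map K d) (P : P1 K) : Set (P1 K) :=
  {Q | ¬ IsPeriodicPoint φ Q ∧ ∃ n, φ.toFun^[n] Q = P}

/-- `P = [a:b]` is a critical point of `φ = [F:G]`: the algebraic condition
`φ([x:y]) = φ([a:b])`, i.e. the form `G(a,b)·F(X,Y) - F(a,b)·G(X,Y)`, vanishes to order
at least `2` at `[a:b]`. -/
def IsCriticalPt (φ : P1Map K d) (P : P1 K) : Prop :=
  ∃ (a b : K) (hab : ![a, b] ≠ 0), P = Projectivization.mk K ![a, b] hab ∧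
    (C b * X 0 - C a * X 1) ^ 2 ∣
      (C (eval ![a, b] φ.G) * φ.F - C (eval ![a, b] φ.F) * φ.G)

/-- `P` belongs to a critical cycle of `φ`: it lies in the orbit of a critical periodic
point. -/
def InCriticalCycle (φ : P1Map K d) (P : P1 K) : Prop :=
  ∃ Q, IsCriticalPt φ Q ∧ IsPeriodicPoint φ Q ∧ ∃ n, φ.toFun^[n] Q = P

/-- The cardinality `|S|` of the set of places `S` consisting of all archimedean places
together with the finite places in `T`. -/
def sCard (K : Type*) [Field K] [NumberField K] (T : Finset (HeightOneSpectrum (𝓞 K))) : ℕ :=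
  T.card + Fintype.card (InfinitePlace K)

/-- `B(s) = 2^{16 s}`. -/
def Bconst (s : ℕ) : ℕ := 2 ^ (16 * s)

/-- `C(n,s) = e^{(6n)^{3n} (n s + 1 - n)}`. -/
def Cconst (n s : ℕ) : ℝ := Real.exp ((6 * n : ℝ) ^ (3 * n) * (n * s + 1 - n))

/-- `CV(d,s) = (3B(s)+13)d + 27B(s) + C(5,s) + 6C(3,s) + 32`. -/
def CVconst (d s : ℕ) : ℝ :=
  (3 * (Bconst s : ℝ) + 13) * d + 27 * (Bconst s : ℝ) + Cconst 5 s + 6 * Cconst 3 s + 32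

/-- `L₁(d,s) = (d-1)(1 + d(1 + B(s)))`. -/
def L1const (d s : ℕ) : ℕ := (d - 1) * (1 + d * (1 + Bconst s))

/-- `L₂(d,s) = max{(2(C(3,s)+2)+1)d + 1, (d-1)(1 + B(s)(B(s) + C(3,s) + 3))}`. -/
def L2const (d s : ℕ) : ℝ :=
  max ((2 * (Cconst 3 s + 2) + 1) * d + 1)
    (((d : ℝ) - 1) * (1 + (Bconst s : ℝ) * ((Bconst s : ℝ) + Cconst 3 s + 3)))

/-- `L₃(d,s) = ((1 + 3B(s))B(s) + 1)(d-1)`. -/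
def L3const (d s : ℕ) : ℕ := ((1 + 3 * Bconst s) * Bconst s + 1) * (d - 1)

/-- `L₄(d,s) = (C(3,s) + 3)(d-1)`. -/
def L4const (d s : ℕ) : ℝ := (Cconst 3 s + 3) * ((d : ℝ) - 1)

end

/-!
Adjoining `(a, b)` to the group reduces the problem to solutions of `x + y = 1` in a group `Γ` of
pairs, at the cost of one more generator. The symmetrised height `N(p) = h(p) + h(p⁻¹)` of the
projective point `(1 : x : y)` is a seminorm on `Γ`, homogeneous for powers, so a packing argument
in `ℚ ⊗ Γ` bounds a `δ`-separated family in a ball of radius `B` by `n ^ rank` as soon as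
`2 B ≤ (n - 1) δ`.

The separation has a different source for each size of the solutions. Since conjugation and
inversion agree on the unit circle, no three solutions can be very close together. Two solutions
of medium height are far apart because one of them is the intersection of two lines with
coefficients of small height. For large solutions, one of the lines is replaced by Padé
approximations to powers of `1 - x`, which exclude certain ratios of the heights of close solutions;
no three close solutions can satisfy all these gaps at once.
-/

namespace UnitEquation

section Rank

open Module
open scoped TensorProduct

variable {G H : Type*} [CommGroup G] [CommGroup H]

/-- The rational vector space `ℚ ⊗ G` of a commutative group `G`; its dimension is the rank
of `G`. -/
abbrev Rationalization (G : Type*) [CommGroup G] : Type _ := ℚ ⊗[ℤ] Additive G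

lemma isOfFinOrder_of_one_tmul_eq_zero {x : G}
    (hx : (1 : ℚ) ⊗ₜ[ℤ] Additive.ofMul x = 0) : IsOfFinOrder x := by
  let toLocalization := TensorProduct.mk ℤ ℚ (Additive G) 1
  have : IsLocalizedModule (nonZeroDivisors ℤ) toLocalization :=
    (isLocalizedModule_iff_isBaseChange (nonZeroDivisors ℤ) ℚ toLocalization).mpr
      (TensorProduct.isBaseChange ℤ (Additive G) ℚ)
  obtain ⟨c, hc⟩ := (IsLocalizedModule.eq_zero_iff (nonZeroDivisors ℤ) toLocalization).mp hx
  exact isOfFinOrder_iff_zpow_eq_one.mpr ⟨c, nonZeroDivisors.coe_ne_zero c, hc⟩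

/-- The coordinates come from a basis of `ℚ ⊗ G`, after clearing the denominators of the
`f i`. -/
lemma exists_intCoords [Module.Finite ℚ (Rationalization G)] {ι : Type*} [Finite ι] (f : ι → G) :
    ∃ (c : Additive G →+ (Fin (finrank ℚ (Rationalization G)) → ℚ))
      (g : ι → Fin (finrank ℚ (Rationalization G)) → ℤ),
      (∀ x, c (.ofMul x) = 0 → IsOfFinOrder x) ∧ ∀ i k, c (.ofMul (f i)) k = g i k := by
  let coords := (finBasis ℚ (Rationalization G)).equivFun
  let v (x : Additive G) : Rationalization G := (1 : ℚ) ⊗ₜ[ℤ] x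
  obtain ⟨d, hd⟩ := IsLocalization.exist_integer_multiples_of_finite (nonZeroDivisors ℤ)
    fun p : ι × Fin _ ↦ coords (v (.ofMul (f p.1))) p.2
  choose g hg using hd
  refine ⟨(d : ℤ) • (coords.toAddMonoidHom.comp
    (TensorProduct.mk ℤ ℚ (Additive G) 1).toAddMonoidHom), fun i k ↦ g (i, k), fun x hx ↦ ?_,
    fun i k ↦ (hg (i, k)).symm⟩
  have hdx : (d : ℤ) • coords (v (.ofMul x)) = 0 := hx
  exact isOfFinOrder_of_one_tmul_eq_zero <| coords.map_eq_zero_iff.mp <|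
    (smul_eq_zero.mp hdx).resolve_left (nonZeroDivisors.coe_ne_zero d)

/-- The `ℚ`-linear map `ℚ ⊗ G → ℚ ⊗ H` induced by a homomorphism `G → H`. -/
noncomputable def rationalizationMap (φ : G →* H) : Rationalization G →ₗ[ℚ] Rationalization H :=
  φ.toAdditive.toIntLinearMap.baseChange ℚ

lemma rationalizationMap_surjective {φ : G →* H} (hφ : Function.Surjective φ) :
    Function.Surjective (rationalizationMap φ) :=
  LinearMap.lTensor_surjective ℚ hφ

/-- The isomorphism `ℚ ⊗ (G × H) ≃ (ℚ ⊗ G) × (ℚ ⊗ H)`. -/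
noncomputable def rationalizationProdEquiv (G H : Type*) [CommGroup G] [CommGroup H] :
    Rationalization (G × H) ≃ₗ[ℚ] Rationalization G × Rationalization H :=
  (AddEquiv.prodAdditive G H).toIntLinearEquiv.baseChange ℤ ℚ _ _ ≪≫ₗ
    TensorProduct.prodRight ℤ ℚ ℚ (Additive G) (Additive H)

instance finite_rationalization_prod [Module.Finite ℚ (Rationalization G)]
    [Module.Finite ℚ (Rationalization H)] : Module.Finite ℚ (Rationalization (G × H)) :=
  Module.Finite.equiv (rationalizationProdEquiv G H).symm

lemma finrank_rationalization_prod [Module.Finite ℚ (Rationalization G)]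
    [Module.Finite ℚ (Rationalization H)] : finrank ℚ (Rationalization (G × H)) =
      finrank ℚ (Rationalization G) + finrank ℚ (Rationalization H) := by
  rw [(rationalizationProdEquiv G H).finrank_eq, finrank_prod]

instance finite_rationalization_multiplicative_int :
    Module.Finite ℚ (Rationalization (Multiplicative ℤ)) :=
  Module.Finite.base_change ℤ ℚ ℤ

lemma finrank_rationalization_multiplicative_int :
    finrank ℚ (Rationalization (Multiplicative ℤ)) = 1 :=
  (finrank_baseChange (R := ℚ) (S := ℤ) (M' := ℤ)).trans (finrank_self ℤ)

/-- The isomorphism of rationalizations induced by an isomorphism of groups. -/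
noncomputable def rationalizationCongr (e : G ≃* H) :
    Rationalization G ≃ₗ[ℚ] Rationalization H :=
  e.toAdditive.toIntLinearEquiv.baseChange ℤ ℚ _ _

lemma finite_rationalization_subgroup_prod (A : Subgroup G) (B : Subgroup H)
    [Module.Finite ℚ (Rationalization A)] [Module.Finite ℚ (Rationalization B)] :
    Module.Finite ℚ (Rationalization (A.prod B)) :=
  Module.Finite.equiv (rationalizationCongr (A.prodEquiv B)).symm

lemma finrank_rationalization_subgroup_prod (A : Subgroup G) (B : Subgroup H)
    [Module.Finite ℚ (Rationalization A)] [Module.Finite ℚ (Rationalization B)] :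
    finrank ℚ (Rationalization (A.prod B)) =
      finrank ℚ (Rationalization A) + finrank ℚ (Rationalization B) := by
  rw [(rationalizationCongr (A.prodEquiv B)).finrank_eq, finrank_rationalization_prod]

end Rank

section Packing

variable {G ι : Type*} [CommGroup G] (N : GroupSeminorm G) (f : ι → G) {n : ℕ} {B δ : ℝ}

/-- The element of `G` with digits `f (t i)` in base `n`. -/
def digitProd (f : ι → G) (n : ℕ) {j : ℕ} (t : Fin j → ι) : G := ∏ i, f (t i) ^ n ^ (i : ℕ)

lemma digitProd_succ (n : ℕ) {j : ℕ} (t : Fin (j + 1) → ι) :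
    digitProd f n t = f (t 0) * digitProd f n (Fin.tail t) ^ n := by
  simp only [digitProd, Fin.prod_univ_succ, Fin.val_zero, pow_zero, pow_one, Fin.val_succ,
    Fin.tail, pow_succ, pow_mul, Finset.prod_pow]

variable {N f}

lemma seminorm_eq_zero_of_isOfFinOrder (hN : ∀ (m : ℕ) x, N (x ^ m) = m * N x) {x : G}
    (hx : IsOfFinOrder x) : N x = 0 := by
  obtain ⟨m, hm, hxm⟩ := isOfFinOrder_iff_pow_eq_one.mp hx
  have := hN m x
  rw [hxm, map_one_eq_zero, zero_eq_mul] at this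
  exact this.resolve_left (by positivity)

lemma le_seminorm_digitProd_div (hN : ∀ (m : ℕ) x, N (x ^ m) = m * N x)
    (hB : ∀ i, N (f i) ≤ B) (hδ : Pairwise fun i j ↦ δ ≤ N (f i / f j))
    (hn : 2 * B ≤ ((n : ℝ) - 1) * δ) {j : ℕ} {t t' : Fin j → ι} (h : t ≠ t') :
    δ ≤ N (digitProd f n t / digitProd f n t') := by
  induction j with
  | zero => exact absurd (Subsingleton.elim t t') h
  | succ j ih =>
    rw [digitProd_succ, digitProd_succ, mul_div_mul_comm, ← div_pow]
    by_cases htail : Fin.tail t = Fin.tail t'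
    · rw [htail, div_self', one_pow, mul_one]
      exact hδ fun h0 ↦ h (by rw [← Fin.cons_self_tail t, ← Fin.cons_self_tail t', h0, htail])
    · set q := digitProd f n (Fin.tail t) / digitProd f n (Fin.tail t')
      have hq : N (q ^ n) ≤ N (f (t 0) / f (t' 0) * q ^ n) + N (f (t 0) / f (t' 0)) := by
        simpa only [mul_div_cancel_left] using
          map_div_le_add N (f (t 0) / f (t' 0) * q ^ n) (f (t 0) / f (t' 0))
      have hhead := map_div_le_add N (f (t 0)) (f (t' 0))
      have hδq : (n : ℝ) * δ ≤ n * N q := by gcongr; exact ih htail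
      linarith [hN n q, hB (t 0), hB (t' 0)]

lemma le_of_forall_pow_le_mul_pow {a b C : ℕ} (h : ∀ j : ℕ, a ^ j ≤ C * b ^ j) : a ≤ b := by
  by_contra! hab
  rcases b.eq_zero_or_pos with rfl | hb
  · have := h 1
    lia
  have hr : (1 : ℝ) < (a : ℝ) / b := (one_lt_div (by positivity)).mpr (by exact_mod_cast hab)
  obtain ⟨j, hj⟩ := pow_unbounded_of_one_lt (C : ℝ) hr
  rw [div_pow, lt_div_iff₀ (by positivity)] at hj
  exact hj.not_ge (by exact_mod_cast h j)

lemma abs_sum_pow_mul_le {g : ι → ℤ} {C : ℕ} (hg : ∀ i, |g i| ≤ C) (hn : 2 ≤ n) {j : ℕ}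
    (t : Fin j → ι) : |∑ i : Fin j, (n : ℤ) ^ (i : ℕ) * g (t i)| ≤ C * n ^ j := by
  have hgeom : ∑ i : Fin j, (n : ℤ) ^ (i : ℕ) ≤ n ^ j := by
    rw [Fin.sum_univ_eq_sum_range fun i ↦ (n : ℤ) ^ i]
    exact_mod_cast (Nat.geomSum_lt hn fun i hi ↦ Finset.mem_range.mp hi).le
  calc |∑ i : Fin j, (n : ℤ) ^ (i : ℕ) * g (t i)|
    _ ≤ ∑ i : Fin j, |(n : ℤ) ^ (i : ℕ) * g (t i)| := Finset.abs_sum_le_sum_abs _ _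
    _ ≤ ∑ i : Fin j, (n : ℤ) ^ (i : ℕ) * C := by
      gcongr with i
      rw [abs_mul, abs_pow, Nat.abs_cast]
      gcongr
      exact hg _
    _ = C * ∑ i : Fin j, (n : ℤ) ^ (i : ℕ) := by rw [← Finset.sum_mul, mul_comm]
    _ ≤ C * n ^ j := by gcongr

lemma card_int_box_le (R C : ℕ) {M : ℕ} (hM : 1 ≤ M) :
    (Fintype.piFinset fun _ : Fin R ↦ Finset.Icc (-(C * M : ℤ)) (C * M)).card ≤
      (2 * C + 1) ^ R * M ^ R := by
  rw [Fintype.card_piFinset, Finset.prod_const, Finset.card_univ, Fintype.card_fin, ← mul_pow,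
    Int.card_Icc]
  gcongr
  rw [Int.toNat_le]
  push_cast
  linarith [(by exact_mod_cast hM : (1 : ℤ) ≤ M)]

/-- Distinct digit sequences of length `j` give `δ`-separated elements, whose integer coordinates
are of size `O(n ^ j)`; so there are at most `O(n ^ (j * rank))` such sequences. -/
lemma card_le_pow_finrank [Module.Finite ℚ (Rationalization G)] [Fintype ι]
    (hN : ∀ (m : ℕ) x, N (x ^ m) = m * N x) (hn2 : 2 ≤ n) (hδ0 : 0 < δ)
    (hB : ∀ i, N (f i) ≤ B) (hδ : Pairwise fun i j ↦ δ ≤ N (f i / f j))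
    (hn : 2 * B ≤ ((n : ℝ) - 1) * δ) :
    Fintype.card ι ≤ n ^ Module.finrank ℚ (Rationalization G) := by
  obtain ⟨c, g, hc, hg⟩ := exists_intCoords f
  obtain ⟨C, hC⟩ := (Set.finite_range fun p : ι × Fin _ ↦ (g p.1 p.2).natAbs).bddAbove
  have hgC (k) (i) : |g i k| ≤ C := by
    rw [Int.abs_eq_natAbs]
    exact_mod_cast hC ⟨(i, k), rfl⟩
  refine le_of_forall_pow_le_mul_pow (C := (2 * C + 1) ^ Module.finrank ℚ (Rationalization G))
    fun j ↦ ?_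
  let z (t : Fin j → ι) k : ℤ := ∑ i : Fin j, (n : ℤ) ^ (i : ℕ) * g (t i) k
  have hz (t : Fin j → ι) : c (.ofMul (digitProd f n t)) = fun k ↦ (z t k : ℚ) := by
    ext k
    simp [z, digitProd, ofMul_prod, hg]
  have hinj : Function.Injective z := by
    intro t t' h
    by_contra hne
    have hzero : c (.ofMul (digitProd f n t / digitProd f n t')) = 0 := by
      rw [ofMul_div, map_sub, hz, hz, h, sub_self]
    exact hδ0.not_ge <| (le_seminorm_digitProd_div hN hB hδ hn hne).trans
      (seminorm_eq_zero_of_isOfFinOrder hN (hc _ hzero)).le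
  have hbox (t) : z t ∈ Fintype.piFinset fun _ ↦
      Finset.Icc (-(C * (n ^ j : ℕ) : ℤ)) (C * (n ^ j : ℕ)) := by
    simp only [Fintype.mem_piFinset, Finset.mem_Icc]
    exact fun k ↦ abs_le.mp (by exact_mod_cast abs_sum_pow_mul_le (hgC k) hn2 t)
  calc Fintype.card ι ^ j = Fintype.card (Fin j → ι) := by simp
    _ ≤ _ := Finset.card_le_card_of_injOn z (fun t _ ↦ hbox t) hinj.injOn
    _ ≤ _ := card_int_box_le _ C (Nat.one_le_pow _ _ (by lia))
    _ = _ := by rw [← pow_mul, ← pow_mul, mul_comm j]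

lemma card_le_mul_pow_finrank [Module.Finite ℚ (Rationalization G)]
    (hN : ∀ (m : ℕ) x, N (x ^ m) = m * N x) (hn2 : 2 ≤ n) (hδ0 : 0 < δ) {s : Finset ι}
    (hB : ∀ i ∈ s, N (f i) ≤ B) (hn : 2 * B ≤ ((n : ℝ) - 1) * δ) {m : ℕ}
    (hm : ∀ x ∈ s, (s.filter fun y ↦ N (f y / f x) < δ).card ≤ m) :
    s.card ≤ m * n ^ Module.finrank ℚ (Rationalization G) := by
  let separated (M : Finset ι) : Prop := (M : Set ι).Pairwise fun x y ↦ δ ≤ N (f x / f y)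
  obtain ⟨M, hM, hmax⟩ := (s.powerset.filter separated).exists_maximal
    ⟨∅, by simp [separated]⟩
  simp only [Finset.mem_filter, Finset.mem_powerset] at hM hmax
  have hcard : M.card ≤ n ^ Module.finrank ℚ (Rationalization G) := by
    simpa using card_le_pow_finrank (f := fun i : M ↦ f i) hN hn2 hδ0 (fun i ↦ hB i (hM.1 i.2))
      (fun i j hij ↦ hM.2 i.2 j.2 (Subtype.coe_ne_coe.mpr hij)) hn
  have hcover : s ⊆ M.biUnion fun x ↦ s.filter fun y ↦ N (f y / f x) < δ := by
    intro y hy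
    by_contra! hfar
    simp only [Finset.mem_biUnion, Finset.mem_filter, hy, true_and, not_exists, not_and,
      not_lt] at hfar
    have hins : separated (insert y M) := by
      simp only [separated, Finset.coe_insert]
      exact hM.2.insert fun x hx _ ↦ ⟨hfar x hx, (hfar x hx).trans_eq (map_div_rev N _ _)⟩
    have hyM : y ∈ M := hmax ⟨Finset.insert_subset hy hM.1, hins⟩ (Finset.subset_insert y M)
      (Finset.mem_insert_self y M)
    exact hδ0.not_ge (by simpa using hfar y hyM)
  calc s.card ≤ _ := Finset.card_le_card hcover
    _ ≤ M.card * m := Finset.card_biUnion_le_card_mul _ _ _ fun x hx ↦ hm x (hM.1 hx)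
    _ ≤ m * n ^ _ := by rw [mul_comm]; gcongr

lemma card_le_two_mul_pow_finrank [Module.Finite ℚ (Rationalization G)]
    (hN : ∀ (m : ℕ) x, N (x ^ m) = m * N x) (hn2 : 2 ≤ n) (hδ0 : 0 < δ) {s : Finset ι}
    (hB : ∀ i ∈ s, N (f i) ≤ B) (hn : 2 * B ≤ ((n : ℝ) - 1) * δ)
    (h3 : ∀ x ∈ s, ∀ y ∈ s, ∀ z ∈ s, x ≠ y → x ≠ z → y ≠ z →
      N (f y / f x) < δ → N (f z / f x) < δ → False) :
    s.card ≤ 2 * n ^ Module.finrank ℚ (Rationalization G) := by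
  refine card_le_mul_pow_finrank hN hn2 hδ0 hB hn fun x hx ↦ ?_
  rw [← Nat.sub_le_iff_le_add (b := 1), ← Finset.card_erase_of_mem (a := x) (by simpa [hx])]
  by_contra! hlt
  obtain ⟨y, hy, z, hz, hyz⟩ := Finset.one_lt_card.mp hlt
  simp only [Finset.mem_erase, Finset.mem_filter] at hy hz
  exact h3 x hx y hy.2.1 z hz.2.1 hy.1.symm hz.1.symm hyz hy.2.2 hz.2.2

end Packing

section LocalHeights

open Height Height.AdmissibleAbsValues Function Matrix

variable {K ι ι' : Type*} [Field K]

lemma iSup_abv_pow [Nonempty ι] [Finite ι] (v : AbsoluteValue K ℝ) (x : ι → K) (n : ℕ) :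
    ⨆ i, v ((x ^ n) i) = (⨆ i, v (x i)) ^ n := by
  simp only [Pi.pow_apply, map_pow]
  exact (Real.iSup_pow (fun i ↦ v.nonneg _) n).symm

lemma mul_tensor_ne_zero {x : ι → K} (hx : x ≠ 0) {y : ι' → K} (hy : y ≠ 0) :
    (fun a : ι × ι' ↦ x a.1 * y a.2) ≠ 0 := by
  obtain ⟨i, hi⟩ := ne_iff.mp hx
  obtain ⟨j, hj⟩ := ne_iff.mp hy
  exact ne_iff.mpr ⟨(i, j), mul_ne_zero hi hj⟩

variable [AdmissibleAbsValues K]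

lemma hasFiniteMulSupport_iSup [Finite ι] {x : ι → K} (hx : x ≠ 0) :
    (fun v : nonarchAbsVal (K := K) ↦ ⨆ i, v.val (x i)).HasFiniteMulSupport := by
  obtain ⟨i, hi⟩ := ne_iff.mp hx
  refine (Set.finite_iUnion fun j : {j // x j ≠ 0} ↦
    hasFiniteMulSupport (K := K) j.2).subset fun v hv ↦ ?_
  by_contra h
  simp only [Set.mem_iUnion, not_exists, notMem_mulSupport, Subtype.forall] at h
  have : Nonempty ι := ⟨i⟩
  refine hv <| le_antisymm (ciSup_le fun j ↦ ?_) ((h i hi).ge.trans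
    (Finite.le_ciSup (fun j ↦ v.val (x j)) i))
  rcases eq_or_ne (x j) 0 with hj | hj
  · simp [hj]
  · exact (h j hj).le

lemma mulHeight_le_of_local [Finite ι] [Finite ι'] {x : ι → K} {y : ι' → K} (hx : x ≠ 0)
    (hy : y ≠ 0) (n : ℕ) (C : ℝ)
    (harch : ∀ v ∈ archAbsVal (K := K), ∀ i, v (x i) ≤ C * (⨆ j, v (y j)) ^ n)
    (hnonarch : ∀ v ∈ nonarchAbsVal (K := K), ∀ i, v (x i) ≤ (⨆ j, v (y j)) ^ n) :
    mulHeight x ≤ C ^ totalWeight K * mulHeight y ^ n := by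
  have : Nonempty ι := (ne_iff.mp hx).nonempty
  have : Nonempty ι' := (ne_iff.mp hy).nonempty
  have hyn : y ^ n ≠ 0 := pow_ne_zero n hy
  have hsup (v : AbsoluteValue K ℝ) {κ : Type _} (z : κ → K) : 0 ≤ ⨆ i, v (z i) :=
    Real.iSup_nonneg_of_nonnegHomClass v _
  have hprod : (archAbsVal.map fun v : AbsoluteValue K ℝ ↦ ⨆ i, v (x i)).prod ≤
      C ^ totalWeight K *
        (archAbsVal.map fun v : AbsoluteValue K ℝ ↦ ⨆ i, v ((y ^ n) i)).prod := by
    rw [← Multiset.prod_replicate, totalWeight, ← Multiset.map_const', ← Multiset.prod_map_mul]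
    refine Multiset.prod_map_le_prod_map₀ _ _ (fun v _ ↦ hsup v x) fun v hv ↦ ?_
    rw [iSup_abv_pow]
    exact ciSup_le (harch v hv)
  have hfinprod : ∏ᶠ v : nonarchAbsVal (K := K), ⨆ i, v.val (x i) ≤
      ∏ᶠ v : nonarchAbsVal (K := K), ⨆ i, v.val ((y ^ n) i) := by
    refine finprod_le_finprod (hasFiniteMulSupport_iSup hx) (fun v ↦ hsup v.val x)
      (hasFiniteMulSupport_iSup hyn) fun v ↦ ?_
    simp only [iSup_abv_pow]
    exact ciSup_le (hnonarch v.1 v.2)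
  rw [← mulHeight_pow, mulHeight_eq hx, mulHeight_eq hyn, ← mul_assoc]
  exact mul_le_mul hprod hfinprod (finprod_nonneg fun v ↦ hsup v.val x)
    ((Multiset.prod_map_nonneg fun v _ ↦ hsup v x).trans hprod)

lemma logHeight_le_of_local [Finite ι] [Finite ι'] {x : ι → K} {y : ι' → K} (hx : x ≠ 0)
    (hy : y ≠ 0) (n : ℕ) {C : ℝ} (hC : 0 < C)
    (harch : ∀ v ∈ archAbsVal (K := K), ∀ i, v (x i) ≤ C * (⨆ j, v (y j)) ^ n)
    (hnonarch : ∀ v ∈ nonarchAbsVal (K := K), ∀ i, v (x i) ≤ (⨆ j, v (y j)) ^ n) :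
    logHeight x ≤ totalWeight K * Real.log C + n * logHeight y := by
  simp only [logHeight_eq_log_mulHeight]
  have h := Real.log_le_log (mulHeight_pos x) (mulHeight_le_of_local hx hy n C harch hnonarch)
  rwa [Real.log_mul (by positivity) (pow_ne_zero _ (mulHeight_ne_zero _)), Real.log_pow,
    Real.log_pow] at h

lemma logHeight_crossProduct_le (a b : Fin 3 → K) :
    logHeight (a ⨯₃ b) ≤ totalWeight K * Real.log 2 + logHeight a + logHeight b := by
  rcases eq_or_ne (a ⨯₃ b) 0 with h0 | h0
  · rw [h0, logHeight_zero]
    positivity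
  have ha : a ≠ 0 := by rintro rfl; simp at h0
  have hb : b ≠ 0 := by rintro rfl; simp at h0
  have hentry (i : Fin 3) : ∃ j k, (a ⨯₃ b) i = a j * b k - a k * b j := by
    rw [cross_apply]
    fin_cases i
    exacts [⟨1, 2, rfl⟩, ⟨2, 0, rfl⟩, ⟨0, 1, rfl⟩]
  have hle (v : AbsoluteValue K ℝ) (j k) : v (a j * b k) ≤ ⨆ t : Fin 3 × Fin 3, v (a t.1 * b t.2) :=
    Finite.le_ciSup (fun t : Fin 3 × Fin 3 ↦ v (a t.1 * b t.2)) (j, k)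
  have := logHeight_le_of_local h0 (mul_tensor_ne_zero ha hb) 1 zero_lt_two ?_ ?_
  · rwa [Nat.cast_one, one_mul, logHeight_fun_mul_eq ha hb, ← add_assoc] at this
  · intro v _ i
    obtain ⟨j, k, hjk⟩ := hentry i
    rw [hjk, pow_one]
    linarith [v.sub_le_add (a j * b k) (a k * b j), hle v j k, hle v k j]
  · intro v hv i
    obtain ⟨j, k, hjk⟩ := hentry i
    rw [hjk, pow_one, sub_eq_add_neg]
    refine (isNonarchimedean v hv _ _).trans (max_le (hle v j k) ?_)
    rw [v.map_neg]
    exact hle v k j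

lemma logHeight_le_of_dotProduct_eq_zero {a b w : Fin 3 → K} (hab : a ⨯₃ b ≠ 0)
    (ha : a ⬝ᵥ w = 0) (hb : b ⬝ᵥ w = 0) :
    logHeight w ≤ totalWeight K * Real.log 2 + logHeight a + logHeight b := by
  rcases eq_or_ne w 0 with rfl | hw
  · rw [logHeight_zero]
    positivity
  refine le_of_eq_of_le ?_ (logHeight_crossProduct_le a b)
  have hparallel : w ⨯₃ (a ⨯₃ b) = 0 := by
    rw [cross_cross_eq_smul_sub_smul', dotProduct_comm w b, dotProduct_comm a w]
    simp [ha, hb, dotProduct_comm w a]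
  obtain ⟨c, hc⟩ : ∃ c : K, c • w = a ⨯₃ b := by
    by_contra! h
    exact crossProduct_ne_zero_iff_linearIndependent.mpr
      ((LinearIndependent.pair_iff' hw).mpr h) hparallel
  rw [← hc, logHeight_smul_eq_logHeight]
  rintro rfl
  exact hab (by rw [← hc, zero_smul])

end LocalHeights

section Pade

open Polynomial Finset
open scoped Nat

lemma integral_pow_mul_one_sub_pow (a b : ℕ) :
    ∫ t in (0 : ℝ)..1, t ^ a * (1 - t) ^ b = (a ! * b ! : ℝ) / (a + b + 1)! := by
  have h := Complex.Gamma_mul_Gamma_eq_betaIntegral (s := a + 1) (t := b + 1)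
    (by simp only [Complex.add_re, Complex.natCast_re, Complex.one_re]; positivity)
    (by simp only [Complex.add_re, Complex.natCast_re, Complex.one_re]; positivity)
  rw [show (a + 1 + (b + 1) : ℂ) = ((a + b + 1 : ℕ) : ℂ) + 1 by push_cast; ring,
    Complex.Gamma_nat_eq_factorial, Complex.Gamma_nat_eq_factorial, Complex.Gamma_nat_eq_factorial,
    Complex.betaIntegral] at h
  simp only [add_sub_cancel_right, Complex.cpow_natCast] at h
  have hcast : ∫ t in (0 : ℝ)..1, (t : ℂ) ^ a * (1 - t) ^ b =
      (∫ t in (0 : ℝ)..1, t ^ a * (1 - t) ^ b : ℝ) := by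
    rw [← intervalIntegral.integral_ofReal]
    push_cast
    rfl
  rw [hcast] at h
  rw [eq_div_iff (by positivity), mul_comm]
  exact_mod_cast h.symm

/-- The coefficients of `padePoly`. -/
def padeCoeff (p q r j : ℕ) : ℤ :=
  (-1) ^ j * (p + q + r + 1).choose (q - j) * (p + j).choose j

/-- The Padé polynomial of degree `q` which, multiplied by `X ^ (p + r + 1)`, is the integral
`∫₀ˣ tᵖ (1 - t)^q (X - t)^r dt`, normalised by the factor `(p + q + r + 1)! / (p! q! r!)` to have
integer coefficients. -/
noncomputable def padePoly (p q r : ℕ) : ℤ[X] :=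
  ∑ j ∈ range (q + 1), Polynomial.C (padeCoeff p q r j) * Polynomial.X ^ j

lemma padePoly_natDegree_le (p q r : ℕ) : (padePoly p q r).natDegree ≤ q :=
  natDegree_sum_le_of_forall_le _ _ fun j hj ↦
    (natDegree_C_mul_X_pow_le _ j).trans (Nat.lt_succ_iff.mp (mem_range.mp hj))

lemma padePoly_coeff {p q r j : ℕ} (hj : j ≤ q) : (padePoly p q r).coeff j = padeCoeff p q r j := by
  simp only [padePoly, finsetSum_coeff, coeff_C_mul_X_pow]
  rw [sum_ite_eq, if_pos (by simpa [Nat.lt_succ_iff])]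

lemma reflect_natDegree_le {R : Type*} [Semiring R] {P : R[X]} {n : ℕ} (hP : P.natDegree ≤ n) :
    (P.reflect n).natDegree ≤ n :=
  natDegree_reflect_le.trans (max_le le_rfl hP)

lemma aeval_padePoly {R : Type*} [CommRing R] (p q r : ℕ) (x : R) :
    aeval x (padePoly p q r) = ∑ j ∈ range (q + 1), (padeCoeff p q r j : R) * x ^ j := by
  simp [padePoly]

lemma aeval_reflect_padePoly {R : Type*} [CommRing R] (p q r : ℕ) (x : R) :
    aeval x ((padePoly p r q).reflect r) =
      ∑ j ∈ range (r + 1), (padeCoeff p r q j : R) * x ^ (r - j) := by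
  have hdeg := reflect_natDegree_le (padePoly_natDegree_le p r q)
  rw [aeval_eq_sum_range' (Nat.lt_succ_iff.mpr hdeg), ← sum_range_reflect]
  refine sum_congr rfl fun j hj ↦ ?_
  have hjr : j ≤ r := Nat.lt_succ_iff.mp (mem_range.mp hj)
  rw [coeff_reflect, Nat.succ_sub_one, revAt_le (Nat.sub_le r j), Nat.sub_sub_self hjr,
    padePoly_coeff hjr, zsmul_eq_mul]

lemma factorial_mul_choose_mul_beta_eq (p q r : ℕ) {j : ℕ} (hj : j ≤ q) :
    ((p + q + r + 1)! : ℝ) / (p ! * q ! * r !) *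
      ((q.choose j : ℝ) * (-1) ^ j * (((p + j)! * r ! : ℝ) / (p + j + r + 1)!)) =
      padeCoeff p q r j := by
  obtain ⟨i, rfl⟩ := Nat.exists_eq_add_of_le hj
  simp only [padeCoeff, Int.cast_mul, Int.cast_pow, Int.cast_neg, Int.cast_one, Int.cast_natCast]
  rw [Nat.cast_choose ℝ (show j ≤ j + i by lia),
    Nat.cast_choose ℝ (show j + i - j ≤ p + (j + i) + r + 1 by lia),
    Nat.cast_choose ℝ (show j ≤ p + j by lia),
    show j + i - j = i by lia, show p + (j + i) + r + 1 - i = p + j + r + 1 by lia,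
    show p + j - j = p by lia]
  field_simp

lemma integral_zero_self_eq_padePoly (p q r : ℕ) (x : ℝ) :
    ((p + q + r + 1)! : ℝ) / (p ! * q ! * r !) *
      ∫ t in (0 : ℝ)..x, t ^ p * (1 - t) ^ q * (x - t) ^ r =
      x ^ (p + r + 1) * aeval x (padePoly p q r) := by
  have hscale := intervalIntegral.smul_integral_comp_mul_left (a := 0) (b := 1)
    (fun t : ℝ ↦ t ^ p * (1 - t) ^ q * (x - t) ^ r) x
  have hexpand (s : ℝ) : (x * s) ^ p * (1 - x * s) ^ q * (x - x * s) ^ r =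
      ∑ j ∈ range (q + 1), x ^ (p + r) * ((q.choose j : ℝ) * (-1) ^ j * x ^ j) *
        (s ^ (p + j) * (1 - s) ^ r) := by
    rw [show 1 - x * s = -(x * s) + 1 by ring, add_pow, mul_sum, sum_mul]
    refine sum_congr rfl fun j _ ↦ ?_
    rw [show x - x * s = x * (1 - s) by ring, neg_pow]
    simp only [one_pow, mul_pow, pow_add]
    ring
  rw [mul_zero, mul_one] at hscale
  rw [← hscale, smul_eq_mul, aeval_padePoly]
  simp_rw [hexpand]
  rw [intervalIntegral.integral_finsetSum fun j _ ↦
    Continuous.intervalIntegrable (by fun_prop) _ _]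
  simp_rw [intervalIntegral.integral_const_mul, integral_pow_mul_one_sub_pow, mul_sum]
  refine sum_congr rfl fun j hj ↦ ?_
  rw [← factorial_mul_choose_mul_beta_eq p q r (Nat.lt_succ_iff.mp (mem_range.mp hj))]
  ring

lemma integral_zero_one_eq_reflect_padePoly (p q r : ℕ) (x : ℝ) :
    ((p + q + r + 1)! : ℝ) / (p ! * q ! * r !) *
      ∫ t in (0 : ℝ)..1, t ^ p * (1 - t) ^ q * (x - t) ^ r =
      aeval x ((padePoly p r q).reflect r) := by
  have hexpand (t : ℝ) : t ^ p * (1 - t) ^ q * (x - t) ^ r =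
      ∑ j ∈ range (r + 1), ((r.choose j : ℝ) * (-1) ^ j * x ^ (r - j)) *
        (t ^ (p + j) * (1 - t) ^ q) := by
    rw [show x - t = -t + x by ring, add_pow, mul_sum]
    refine sum_congr rfl fun j _ ↦ ?_
    rw [neg_pow, pow_add]
    ring
  rw [aeval_reflect_padePoly]
  simp_rw [hexpand]
  rw [intervalIntegral.integral_finsetSum fun j _ ↦
    Continuous.intervalIntegrable (by fun_prop) _ _]
  simp_rw [intervalIntegral.integral_const_mul, integral_pow_mul_one_sub_pow, mul_sum]
  refine sum_congr rfl fun j hj ↦ ?_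
  rw [← factorial_mul_choose_mul_beta_eq p r q (Nat.lt_succ_iff.mp (mem_range.mp hj)),
    add_right_comm p r q]
  ring

lemma padePoly_identity_real (p q r : ℕ) (x : ℝ) :
    x ^ (p + r + 1) * aeval x (padePoly p q r) +
      (-1) ^ r * ((1 - x) ^ (q + r + 1) * aeval (1 - x) (padePoly q p r)) =
      aeval x ((padePoly p r q).reflect r) := by
  have hsplit := intervalIntegral.integral_add_adjacent_intervals (a := 0) (b := x) (c := 1)
    (f := fun t : ℝ ↦ t ^ p * (1 - t) ^ q * (x - t) ^ r) (μ := MeasureTheory.volume)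
    (Continuous.intervalIntegrable (by fun_prop) _ _)
    (Continuous.intervalIntegrable (by fun_prop) _ _)
  have hflip : ∫ t in (0 : ℝ)..(1 - x), t ^ q * (1 - t) ^ p * (1 - x - t) ^ r =
      (-1) ^ r * ∫ t in x..1, t ^ p * (1 - t) ^ q * (x - t) ^ r := by
    have hsub := intervalIntegral.integral_comp_sub_left (a := x) (b := 1)
      (fun t : ℝ ↦ t ^ q * (1 - t) ^ p * (1 - x - t) ^ r) 1
    rw [sub_self] at hsub
    rw [← hsub, ← intervalIntegral.integral_const_mul]
    congr 1 with t
    rw [show 1 - x - (1 - t) = -(x - t) by ring, neg_pow (x - t)]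
    ring
  have hsign : ((-1 : ℝ) ^ r) * (-1) ^ r = 1 := by rw [← mul_pow, neg_one_mul, neg_neg, one_pow]
  rw [← integral_zero_self_eq_padePoly, ← integral_zero_self_eq_padePoly q p r,
    ← integral_zero_one_eq_reflect_padePoly, hflip, ← hsplit, add_comm q p, mul_comm (q ! : ℝ)]
  linear_combination ((p + q + r + 1)! : ℝ) / (p ! * q ! * r !) *
    (∫ t in x..1, t ^ p * (1 - t) ^ q * (x - t) ^ r) * hsign

lemma padePoly_identity_poly (p q r : ℕ) :
    Polynomial.X ^ (p + r + 1) * padePoly p q r +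
      (-1) ^ r * ((1 - Polynomial.X) ^ (q + r + 1) * (padePoly q p r).comp (1 - Polynomial.X)) =
      (padePoly p r q).reflect r := by
  refine Polynomial.map_injective (Int.castRingHom ℝ) (RingHom.injective_int _)
    (Polynomial.funext fun x ↦ ?_)
  have heval (P : ℤ[X]) : (P.map (Int.castRingHom ℝ)).eval x = Polynomial.aeval x P :=
    Polynomial.eval_map_algebraMap P x
  rw [heval, heval]
  simpa [aeval_comp] using padePoly_identity_real p q r x

lemma padePoly_identity {R : Type*} [CommRing R] (p q r : ℕ) {x y : R} (hxy : x + y = 1) :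
    x ^ (p + r + 1) * aeval x (padePoly p q r) +
      (-1) ^ r * (y ^ (q + r + 1) * aeval y (padePoly q p r)) =
      aeval x ((padePoly p r q).reflect r) := by
  obtain rfl : y = 1 - x := eq_sub_of_add_eq' hxy
  rw [← padePoly_identity_poly p q r]
  simp [aeval_comp]

lemma natDegree_one_sub_X_pow (n : ℕ) : ((1 - Polynomial.X : ℤ[X]) ^ n).natDegree = n := by
  rw [natDegree_pow, ← neg_sub, natDegree_neg, ← Polynomial.C_1, natDegree_X_sub_C, mul_one]

lemma exists_eq_C_of_natDegree_mul_le {R : Type*} [Semiring R] [NoZeroDivisors R] {P Q : R[X]}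
    (h0 : P * Q ≠ 0) (hdeg : (P * Q).natDegree ≤ P.natDegree) :
    ∃ d ≠ 0, Q = Polynomial.C d := by
  have hP := left_ne_zero_of_mul h0
  have hQ := right_ne_zero_of_mul h0
  rw [natDegree_mul hP hQ] at hdeg
  obtain ⟨d, rfl⟩ := natDegree_eq_zero.mp (show Q.natDegree = 0 by lia)
  exact ⟨d, by rintro rfl; exact hQ Polynomial.C_0, rfl⟩

/-- The determinant of the two Padé systems `(k + 1, k + 1, k)` and `(k, k, k + 1)` is a
polynomial of degree `2k + 2` divisible by `(1 - X) ^ (2k + 2)`. -/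
lemma exists_padePoly_det_eq_C (k : ℕ) : ∃ d ≠ 0,
    (-1) ^ (k + 1) * (padePoly (k + 1) (k + 1) k *
      (padePoly k k (k + 1)).comp (1 - Polynomial.X) +
      padePoly k k (k + 1) * (padePoly (k + 1) (k + 1) k).comp (1 - Polynomial.X)) =
    Polynomial.C d := by
  set A := padePoly (k + 1) (k + 1) k
  set A' := padePoly k k (k + 1)
  set E := (padePoly (k + 1) k (k + 1)).reflect k
  set E' := (padePoly k (k + 1) k).reflect (k + 1)
  have hfactor : A * E' - A' * E = (1 - Polynomial.X) ^ (2 * k + 2) *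
      ((-1) ^ (k + 1) *
        (A * A'.comp (1 - Polynomial.X) + A' * A.comp (1 - Polynomial.X))) := by
    simp only [A, A', E, E', ← padePoly_identity_poly]
    ring
  have hA : A.natDegree ≤ k + 1 := padePoly_natDegree_le _ _ _
  have hA' : A'.natDegree ≤ k := padePoly_natDegree_le _ _ _
  have hE : E.natDegree ≤ k := reflect_natDegree_le (padePoly_natDegree_le _ _ _)
  have hE' : E'.natDegree ≤ k + 1 := reflect_natDegree_le (padePoly_natDegree_le _ _ _)
  have hAE' : (A * E').natDegree ≤ 2 * k + 2 := natDegree_mul_le.trans (by lia)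
  have hA'E : (A' * E).natDegree < 2 * k + 2 := natDegree_mul_le.trans_lt (by lia)
  have hcoeff : (A * E' - A' * E).coeff (2 * k + 2) =
      padeCoeff (k + 1) (k + 1) k (k + 1) * padeCoeff k (k + 1) k 0 := by
    rw [Polynomial.coeff_sub, coeff_eq_zero_of_natDegree_lt hA'E, sub_zero,
      show 2 * k + 2 = (k + 1) + (k + 1) by ring, coeff_mul_add_eq_of_natDegree_le hA hE',
      coeff_reflect, revAt_le le_rfl, Nat.sub_self, padePoly_coeff le_rfl,
      padePoly_coeff (Nat.zero_le _)]
  have h0 : A * E' - A' * E ≠ 0 := by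
    intro h
    rw [h, Polynomial.coeff_zero] at hcoeff
    have hchoose₁ := (Nat.choose_pos (show k + 1 ≤ k + 1 + (k + 1) by lia)).ne'
    have hchoose₂ := (Nat.choose_pos (show k + 1 ≤ k + (k + 1) + k + 1 by lia)).ne'
    simp [padeCoeff, hchoose₁, hchoose₂] at hcoeff
  rw [hfactor] at h0
  refine exists_eq_C_of_natDegree_mul_le h0 ?_
  rw [← hfactor, natDegree_one_sub_X_pow]
  exact (natDegree_sub_le _ _).trans (max_le hAE' hA'E.le)

lemma padePoly_det_ne_zero {R : Type*} [CommRing R] [CharZero R] (k : ℕ) {x y : R}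
    (hxy : x + y = 1) :
    aeval x (padePoly (k + 1) (k + 1) k) * aeval y (padePoly k k (k + 1)) +
      aeval x (padePoly k k (k + 1)) * aeval y (padePoly (k + 1) (k + 1) k) ≠ 0 := by
  obtain rfl : y = 1 - x := eq_sub_of_add_eq' hxy
  obtain ⟨d, hd, h⟩ := exists_padePoly_det_eq_C k
  have hx := congrArg (Polynomial.aeval x) h
  simp only [map_mul, map_add, Polynomial.aeval_comp, map_sub, map_one, Polynomial.aeval_X,
    Polynomial.aeval_C] at hx
  intro h0
  rw [h0, mul_zero] at hx
  exact hd (by simpa using hx.symm)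

lemma sum_range_choose_le_two_pow (n m : ℕ) : ∑ j ∈ range m, n.choose j ≤ 2 ^ n := by
  rw [← Nat.sum_range_choose]
  refine sum_le_sum_of_ne_zero fun j _ hj ↦ ?_
  exact mem_range_succ_iff.mpr (not_lt.mp (mt Nat.choose_eq_zero_of_lt hj))

lemma sum_abs_padeCoeff_le (p q r : ℕ) :
    ∑ j ∈ range (q + 1), |padeCoeff p q r j| ≤ 2 ^ (p + q + r + 1 + (p + q)) := by
  have hterm (j) (hj : j ∈ range (q + 1)) :
      |padeCoeff p q r j| ≤ ((p + q + r + 1).choose (q - j) * 2 ^ (p + q) : ℕ) := by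
    have hchoose : (p + j).choose j ≤ 2 ^ (p + q) := (Nat.choose_le_two_pow _ _).trans <|
      Nat.pow_le_pow_right two_pos (by have := mem_range.mp hj; lia)
    simp only [padeCoeff, abs_mul, abs_pow, abs_neg, abs_one, one_pow, one_mul, Nat.abs_cast]
    exact_mod_cast Nat.mul_le_mul_left _ hchoose
  refine (sum_le_sum hterm).trans ?_
  have hreflect := sum_range_reflect (fun j ↦ (p + q + r + 1).choose j) (q + 1)
  simp only [Nat.add_sub_cancel] at hreflect
  rw [← Nat.cast_sum, ← sum_mul, hreflect,
    pow_add 2 (p + q + r + 1)]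
  exact_mod_cast Nat.mul_le_mul_right _ (sum_range_choose_le_two_pow _ _)

end Pade

section PadeHeight

open Height Height.AdmissibleAbsValues Polynomial Finset Matrix

/-- The sum of the absolute values of the coefficients of an integer polynomial. -/
noncomputable def lengthOf (P : ℤ[X]) : ℤ := P.sum fun _ c ↦ |c|

lemma lengthOf_eq_sum_range {P : ℤ[X]} {n : ℕ} (hP : P.natDegree ≤ n) :
    lengthOf P = ∑ j ∈ range (n + 1), |P.coeff j| :=
  sum_over_range' P (fun _ ↦ abs_zero) _ (Nat.lt_succ_iff.mpr hP)

lemma lengthOf_reflect {P : ℤ[X]} {n : ℕ} (hP : P.natDegree ≤ n) :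
    lengthOf (P.reflect n) = lengthOf P := by
  rw [lengthOf_eq_sum_range hP, lengthOf_eq_sum_range (reflect_natDegree_le hP),
    ← sum_range_reflect]
  refine sum_congr rfl fun j hj ↦ ?_
  rw [coeff_reflect, Nat.succ_sub_one, revAt_le (Nat.sub_le n j),
    Nat.sub_sub_self (Nat.lt_succ_iff.mp (mem_range.mp hj))]

lemma lengthOf_padePoly_le (p q r : ℕ) :
    lengthOf (padePoly p q r) ≤ 2 ^ (p + q + r + 1 + (p + q)) := by
  rw [lengthOf_eq_sum_range (padePoly_natDegree_le p q r)]
  refine (sum_congr rfl fun j hj ↦ ?_).trans_le (sum_abs_padeCoeff_le p q r)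
  rw [padePoly_coeff (Nat.lt_succ_iff.mp (mem_range.mp hj))]

variable {K : Type*} [Field K]

lemma abv_intCast_le (v : AbsoluteValue K ℝ) (c : ℤ) : v c ≤ (|c| : ℤ) := by
  rcases Int.natAbs_eq c with h | h <;> rw [h] <;> simpa using v.apply_nat_le_self c.natAbs

lemma abv_pow_le_pow (v : AbsoluteValue K ℝ) {M : ℝ} (hM : 1 ≤ M) {x : K} (hx : v x ≤ M)
    {j n : ℕ} (hj : j ≤ n) : v (x ^ j) ≤ M ^ n := by
  rw [map_pow]
  exact (pow_le_pow_left₀ (v.nonneg x) hx j).trans (pow_le_pow_right₀ hM hj)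

lemma abv_aeval_le (v : AbsoluteValue K ℝ) {P : ℤ[X]} {n : ℕ} (hP : P.natDegree ≤ n) {M : ℝ}
    (hM : 1 ≤ M) {x : K} (hx : v x ≤ M) : v (Polynomial.aeval x P) ≤ lengthOf P * M ^ n := by
  rw [aeval_eq_sum_range' (Nat.lt_succ_iff.mpr hP), lengthOf_eq_sum_range hP, Int.cast_sum, sum_mul]
  refine (v.sum_le _ _).trans (sum_le_sum fun j hj ↦ ?_)
  rw [zsmul_eq_mul, map_mul]
  have := abv_pow_le_pow v hM hx (Nat.lt_succ_iff.mp (mem_range.mp hj))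
  gcongr
  exact abv_intCast_le v _

lemma abv_aeval_le_of_isNonarchimedean (v : AbsoluteValue K ℝ) (hv : IsNonarchimedean v)
    {P : ℤ[X]} {n : ℕ} (hP : P.natDegree ≤ n) {M : ℝ} (hM : 1 ≤ M) {x : K} (hx : v x ≤ M) :
    v (Polynomial.aeval x P) ≤ M ^ n := by
  rw [aeval_eq_sum_range' (Nat.lt_succ_iff.mpr hP)]
  obtain ⟨j, hj, hle⟩ := hv.finset_image_add_of_nonempty (fun j ↦ P.coeff j • x ^ j)
    (nonempty_range_add_one (n := n))
  refine hle.trans ?_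
  rw [zsmul_eq_mul, map_mul]
  exact (mul_le_of_le_one_left (v.nonneg _) hv.apply_intCast_le_one).trans
    (abv_pow_le_pow v hM hx (Nat.lt_succ_iff.mp (mem_range.mp hj)))

/-- The coefficient vector of the Padé relation, as a linear relation between `-1`,
`x ^ (p + r + 1)` and `y ^ (q + r + 1)` when `x + y = 1`. -/
noncomputable def padeVec (p q r : ℕ) (x y : K) : Fin 3 → K :=
  ![Polynomial.aeval x ((padePoly p r q).reflect r), Polynomial.aeval x (padePoly p q r),
    (-1) ^ r * Polynomial.aeval y (padePoly q p r)]

lemma padeVec_dotProduct (p q r : ℕ) {x y : K} (hxy : x + y = 1) :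
    padeVec p q r x y ⬝ᵥ ![-1, x ^ (p + r + 1), y ^ (q + r + 1)] = 0 := by
  simp only [padeVec, dotProduct, Fin.sum_univ_three, Matrix.cons_val]
  linear_combination padePoly_identity p q r hxy

lemma abv_padeVec_apply (v : AbsoluteValue K ℝ) {n p q r : ℕ} (hp : p ≤ n) (hq : q ≤ n)
    (hr : r ≤ n) (hpqr : p + q + r < 3 * n) (x y : K) (i : Fin 3) :
    ∃ (P : ℤ[X]) (j : Fin 3), P.natDegree ≤ n ∧ lengthOf P ≤ 2 ^ (5 * n) ∧
      v (padeVec p q r x y i) = v (Polynomial.aeval (![1, x, y] j) P) := by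
  have hpow {m : ℕ} (hm : m ≤ 5 * n) : (2 : ℤ) ^ m ≤ 2 ^ (5 * n) :=
    pow_le_pow_right₀ one_le_two hm
  have hlen (p' q' r' : ℕ) (h : p' + q' + r' + 1 + (p' + q') ≤ 5 * n) :
      lengthOf (padePoly p' q' r') ≤ 2 ^ (5 * n) := (lengthOf_padePoly_le _ _ _).trans (hpow h)
  have hdeg := padePoly_natDegree_le p r q
  fin_cases i
  · exact ⟨_, 1, (reflect_natDegree_le hdeg).trans hr,
      (lengthOf_reflect hdeg).trans_le (hlen p r q (by lia)), rfl⟩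
  · exact ⟨_, 1, (padePoly_natDegree_le p q r).trans hq, hlen p q r (by lia), rfl⟩
  · exact ⟨_, 2, (padePoly_natDegree_le q p r).trans hp, hlen q p r (by lia), by simp [padeVec]⟩

lemma logHeight_padeVec_le [AdmissibleAbsValues K] {n p q r : ℕ} (hp : p ≤ n) (hq : q ≤ n)
    (hr : r ≤ n) (hpqr : p + q + r < 3 * n) (x y : K) :
    logHeight (padeVec p q r x y) ≤
      totalWeight K * (5 * n * Real.log 2) + n * logHeight ![1, x, y] := by
  rcases eq_or_ne (padeVec p q r x y) 0 with h0 | h0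
  · rw [h0, logHeight_zero]
    positivity
  have hpoint : ![1, x, y] ≠ 0 := fun h ↦ one_ne_zero (congrFun h 0)
  have hle (v : AbsoluteValue K ℝ) (j : Fin 3) : v (![1, x, y] j) ≤ ⨆ j, v (![1, x, y] j) :=
    Finite.le_ciSup (fun j ↦ v (![1, x, y] j)) j
  have hone (v : AbsoluteValue K ℝ) : 1 ≤ ⨆ j, v (![1, x, y] j) := by simpa using hle v 0
  have := logHeight_le_of_local h0 hpoint n (show (0 : ℝ) < 2 ^ (5 * n) by positivity) ?_ ?_
  · rwa [Real.log_pow, Nat.cast_mul, Nat.cast_ofNat] at this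
  · intro v _ i
    obtain ⟨P, j, hP, hlen, hv⟩ := abv_padeVec_apply v hp hq hr hpqr x y i
    have hM := hone v
    rw [hv]
    refine (abv_aeval_le v hP hM (hle v j)).trans ?_
    gcongr
    exact_mod_cast hlen
  · intro v hv i
    obtain ⟨P, j, hP, -, hvi⟩ := abv_padeVec_apply v hp hq hr hpqr x y i
    rw [hvi]
    exact abv_aeval_le_of_isNonarchimedean v (isNonarchimedean v hv) hP (hone v) (hle v j)

end PadeHeight

section Pairs

open Height Height.AdmissibleAbsValues Matrix

variable {K : Type*} [Field K]

/-- The point `(1 : x : y)` of the projective plane attached to a pair of units. -/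
def projPoint (p : Kˣ × Kˣ) : Fin 3 → K := ![1, p.1, p.2]

/-- The point `(-1 : x : y)`: a pair solves the unit equation iff the coordinates of this point
sum to zero. -/
def signedPoint (p : Kˣ × Kˣ) : Fin 3 → K := ![-1, p.1, p.2]

/-- The pair of units solves the equation `x + y = 1`. -/
def IsUnitSolution (p : Kˣ × Kˣ) : Prop := (p.1 : K) + p.2 = 1

lemma projPoint_ne_zero (p : Kˣ × Kˣ) : projPoint p ≠ 0 := fun h ↦ one_ne_zero (congrFun h 0)

lemma projPoint_mul (p q : Kˣ × Kˣ) : projPoint (p * q) = projPoint p * projPoint q := by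
  ext i
  fin_cases i <;> simp [projPoint]

lemma projPoint_pow (p : Kˣ × Kˣ) (n : ℕ) : projPoint (p ^ n) = projPoint p ^ n := by
  ext i
  fin_cases i <;> simp [projPoint]

lemma signedPoint_pow (u : Kˣ × Kˣ) (n : ℕ) :
    signedPoint (u ^ n) = ![-1, (u.1 : K) ^ n, (u.2 : K) ^ n] := by
  simp [signedPoint]

lemma projPoint_div_dotProduct_signedPoint {v : Kˣ × Kˣ} (hv : IsUnitSolution v) (w : Kˣ × Kˣ) :
    projPoint (v / w) ⬝ᵥ signedPoint w = 0 := by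
  have : (v.1 : K) + v.2 = 1 := hv
  simp [projPoint, signedPoint, dotProduct, Fin.sum_univ_three, add_assoc, this]

variable [AdmissibleAbsValues K]

/-- The logarithmic Weil height of the projective point `(1 : x : y)`. -/
noncomputable def pairHeight (p : Kˣ × Kˣ) : ℝ := logHeight (projPoint p)

lemma pairHeight_nonneg (p : Kˣ × Kˣ) : 0 ≤ pairHeight p := logHeight_nonneg _

lemma pairHeight_one : pairHeight (1 : Kˣ × Kˣ) = 0 := by
  have : projPoint (1 : Kˣ × Kˣ) = 1 := by
    ext i
    fin_cases i <;> rfl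
  rw [pairHeight, this, logHeight_one]

lemma pairHeight_mul_le (p q : Kˣ × Kˣ) : pairHeight (p * q) ≤ pairHeight p + pairHeight q := by
  rw [pairHeight, projPoint_mul]
  exact logHeight_mul_le _ _

lemma pairHeight_pow (p : Kˣ × Kˣ) (n : ℕ) : pairHeight (p ^ n) = n * pairHeight p := by
  rw [pairHeight, projPoint_pow, logHeight_pow, pairHeight]

lemma pairHeight_inv_le (p : Kˣ × Kˣ) : pairHeight p⁻¹ ≤ 2 * pairHeight p := by
  have hinv : projPoint p⁻¹ = ((p.1 : K) * p.2)⁻¹ •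
      ((fun t : Fin 3 × Fin 3 ↦ projPoint p t.1 * projPoint p t.2) ∘
        (![(1, 2), (0, 2), (0, 1)] : Fin 3 → Fin 3 × Fin 3)) := by
    ext i
    have := p.1.ne_zero
    have := p.2.ne_zero
    fin_cases i <;> simp [projPoint] <;> field_simp
  rw [pairHeight, hinv, logHeight_smul_eq_logHeight _ (by simp), two_mul]
  exact (logHeight_comp_le _ _).trans_eq
    (logHeight_fun_mul_eq (projPoint_ne_zero p) (projPoint_ne_zero p))

/-- The symmetrised height `p ↦ h(p) + h(p⁻¹)`. -/
noncomputable def pairNorm : GroupSeminorm (Kˣ × Kˣ) where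
  toFun p := pairHeight p + pairHeight p⁻¹
  map_one' := by simp [pairHeight_one]
  mul_le' p q := by
    rw [mul_inv]
    linarith [pairHeight_mul_le p q, pairHeight_mul_le p⁻¹ q⁻¹]
  inv' p := by rw [inv_inv, add_comm]

lemma pairNorm_apply (p : Kˣ × Kˣ) : pairNorm p = pairHeight p + pairHeight p⁻¹ := rfl

lemma pairHeight_le_pairNorm (p : Kˣ × Kˣ) : pairHeight p ≤ pairNorm p :=
  le_add_of_nonneg_right (pairHeight_nonneg _)

lemma pairNorm_le (p : Kˣ × Kˣ) : pairNorm p ≤ 3 * pairHeight p := by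
  linarith [pairNorm_apply p, pairHeight_inv_le p]

lemma pairNorm_pow (m : ℕ) (p : Kˣ × Kˣ) : pairNorm (p ^ m) = m * pairNorm p := by
  simp only [pairNorm_apply, ← inv_pow, pairHeight_pow, mul_add]

lemma pairHeight_le_logHeight_signedPoint (p : Kˣ × Kˣ) :
    pairHeight p ≤ logHeight (signedPoint p) := by
  have hsign : 2 * logHeight (![-1, 1, 1] : Fin 3 → K) = 0 := by
    have hsq : (![-1, 1, 1] : Fin 3 → K) ^ 2 = 1 := by
      ext i
      fin_cases i <;> simp
    rw [← Nat.cast_two, ← logHeight_pow, hsq, logHeight_one]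
  have hp : projPoint p = ![-1, 1, 1] * signedPoint p := by
    ext i
    fin_cases i <;> simp [projPoint, signedPoint]
  rw [pairHeight, hp]
  linarith [logHeight_mul_le ![-1, 1, 1] (signedPoint p)]

/-- The point `signedPoint w` lies on the line `a` and, since `v` is a solution, on the line
`projPoint (v / w)`; if the lines differ, `w` is recovered as their intersection. -/
lemma pairHeight_le_of_dotProduct_eq_zero {a : Fin 3 → K} {v w : Kˣ × Kˣ}
    (hv : IsUnitSolution v) (ha : a ⬝ᵥ signedPoint w = 0)
    (hne : a 1 * (v / w).2 ≠ a 2 * (v / w).1) :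
    pairHeight w ≤ totalWeight K * Real.log 2 + logHeight a + pairHeight (v / w) := by
  refine (pairHeight_le_logHeight_signedPoint w).trans <| logHeight_le_of_dotProduct_eq_zero
    (fun h ↦ hne ?_) ha (projPoint_div_dotProduct_signedPoint hv w)
  exact sub_eq_zero.mp (congrFun h 0)

lemma pairHeight_le_add_pairHeight_div {u v : Kˣ × Kˣ} (hu : IsUnitSolution u)
    (hv : IsUnitSolution v) (huv : u ≠ v) :
    pairHeight u ≤ totalWeight K * Real.log 2 + pairHeight (v / u) := by
  have hu' : (u.1 : K) + u.2 = 1 := hu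
  have hv' : (v.1 : K) + v.2 = 1 := hv
  have hline : (1 : Fin 3 → K) ⬝ᵥ signedPoint u = 0 := by
    simp [signedPoint, Fin.sum_univ_three, dotProduct, add_assoc, hu']
  have hne : (1 : K) * (v / u).2 ≠ 1 * (v / u).1 := by
    simp only [one_mul, Prod.fst_div, Prod.snd_div, Units.val_div_eq_div_val, ne_eq,
      div_eq_div_iff u.2.ne_zero u.1.ne_zero]
    intro h
    have hfst : (u.1 : K) = v.1 := by linear_combination h + v.1 * hu' - u.1 * hv'
    have hsnd : (u.2 : K) = v.2 := by linear_combination hu' - hv' - hfst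
    exact huv (Prod.ext (Units.ext hfst) (Units.ext hsnd))
  have := pairHeight_le_of_dotProduct_eq_zero hv hline hne
  rwa [logHeight_one, add_zero] at this

lemma pairHeight_add_pairHeight_le {u v : Kˣ × Kˣ} (hu : IsUnitSolution u)
    (hv : IsUnitSolution v) (huv : u ≠ v) :
    pairHeight u + pairHeight v ≤ 2 * (totalWeight K * Real.log 2) + pairNorm (v / u) := by
  rw [pairNorm_apply, inv_div]
  linarith [pairHeight_le_add_pairHeight_div hu hv huv,
    pairHeight_le_add_pairHeight_div hv hu huv.symm]

/-- Of the two Padé relations, at least one differs from any given line through the origin of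
the last two coordinates. -/
lemma exists_padeVec [CharZero K] {u : Kˣ × Kˣ} (hu : IsUnitSolution u) {n : ℕ} (hn : n ≠ 0)
    {s : K} (hs : s ≠ 0) (t : K) : ∃ a : Fin 3 → K, a ⬝ᵥ signedPoint (u ^ (2 * n)) = 0 ∧
      a 1 * t ≠ a 2 * s ∧
      logHeight a ≤ totalWeight K * (5 * n * Real.log 2) + n * pairHeight u := by
  obtain ⟨k, rfl⟩ := Nat.exists_eq_succ_of_ne_zero hn
  rw [signedPoint_pow]
  have hdot₁ := padeVec_dotProduct (k + 1) (k + 1) k hu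
  have hdot₂ := padeVec_dotProduct k k (k + 1) hu
  rw [show k + 1 + k + 1 = 2 * (k + 1) by ring] at hdot₁
  rw [show k + (k + 1) + 1 = 2 * (k + 1) by ring] at hdot₂
  by_cases hne : padeVec (k + 1) (k + 1) k (u.1 : K) u.2 1 * t =
      padeVec (k + 1) (k + 1) k (u.1 : K) u.2 2 * s
  · refine ⟨_, hdot₂, fun hne₂ ↦ padePoly_det_ne_zero k hu <| mul_right_cancel₀ hs <|
      mul_left_cancel₀ (pow_ne_zero (k + 1) (neg_ne_zero.mpr (one_ne_zero (α := K)))) ?_,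
      logHeight_padeVec_le (by lia) (by lia) (by lia) (by lia) _ _⟩
    simp only [padeVec, cons_val_one, cons_val] at hne hne₂
    linear_combination Polynomial.aeval (u.1 : K) (padePoly k k (k + 1)) * hne -
      Polynomial.aeval (u.1 : K) (padePoly (k + 1) (k + 1) k) * hne₂
  · exact ⟨_, hdot₁, hne, logHeight_padeVec_le (by lia) (by lia) (by lia) (by lia) _ _⟩

lemma mul_pairHeight_le_add_pairHeight_div_pow [CharZero K] {u v : Kˣ × Kˣ}
    (hu : IsUnitSolution u) (hv : IsUnitSolution v) {n : ℕ} (hn : n ≠ 0) :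
    n * pairHeight u ≤
      totalWeight K * (6 * n * Real.log 2) + pairHeight (v / u ^ (2 * n)) := by
  obtain ⟨a, hdot, hne, hlogHeight⟩ :=
    exists_padeVec hu hn (v / u ^ (2 * n)).1.ne_zero (v / u ^ (2 * n)).2
  have hmain := pairHeight_le_of_dotProduct_eq_zero hv hdot hne
  have hlog : totalWeight K * Real.log 2 ≤ n * (totalWeight K * Real.log 2) :=
    le_mul_of_one_le_left (by positivity) (Nat.one_le_cast.mpr (Nat.one_le_iff_ne_zero.mpr hn))
  rw [pairHeight_pow, Nat.cast_mul, Nat.cast_two] at hmain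
  linarith

end Pairs

section ThreeSolutions

open Height Height.AdmissibleAbsValues Function

/-- The determinant expressing collinearity of `(1, 1)`, `(a, b)` and `(c, d)`. -/
def collinearDet {R : Type*} [CommRing R] (a b c d : R) : R := (a - 1) * (d - 1) - (c - 1) * (b - 1)

lemma map_collinearDet {R S : Type*} [CommRing R] [CommRing S] (φ : R →+* S) (a b c d : R) :
    φ (collinearDet a b c d) = collinearDet (φ a) (φ b) (φ c) (φ d) := by
  simp only [collinearDet, map_sub, map_mul, map_one]

lemma norm_inv_sub_conj_le {w : ℂ} {M : ℝ} (hM : 0 < M) (hw : ‖w‖ ∈ Set.Icc M⁻¹ M) :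
    ‖w⁻¹ - (starRingEnd ℂ) w‖ ≤ M - M⁻¹ := by
  have hw0 : 0 < ‖w‖ := (inv_pos.mpr hM).trans_le hw.1
  have hinv : w⁻¹ - (starRingEnd ℂ) w = w⁻¹ * ((1 - ‖w‖ ^ 2 : ℝ) : ℂ) := by
    rw [← Complex.normSq_eq_norm_sq, Complex.ofReal_sub, ← Complex.mul_conj, mul_sub,
      Complex.ofReal_one, mul_one, inv_mul_cancel_left₀ (norm_pos_iff.mp hw0)]
  have hscale : ‖w‖⁻¹ * |1 - ‖w‖ ^ 2| = |‖w‖⁻¹ - ‖w‖| := by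
    rw [← abs_of_pos (inv_pos.mpr hw0), ← abs_mul, abs_of_pos (inv_pos.mpr hw0)]
    congr 1
    field_simp
  rw [hinv, norm_mul, norm_inv, Complex.norm_real, Real.norm_eq_abs, hscale, abs_le]
  have hlower : M⁻¹ ≤ ‖w‖⁻¹ := inv_anti₀ hw0 hw.2
  have hupper : ‖w‖⁻¹ ≤ M := inv_le_of_inv_le₀ hM hw.1
  constructor <;> linarith [hw.1, hw.2]

lemma norm_mul_mem_Icc {w z : ℂ} {M N : ℝ} (hM : 0 < M) (hN : 0 < N)
    (hw : ‖w‖ ∈ Set.Icc M⁻¹ M) (hz : ‖z‖ ∈ Set.Icc N⁻¹ N) :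
    ‖w * z‖ ∈ Set.Icc (M * N)⁻¹ (M * N) := by
  rw [norm_mul, mul_inv]
  exact ⟨by gcongr; exacts [hw.1, hz.1], by gcongr; exacts [hw.2, hz.2]⟩

lemma sub_inv_add_sub_inv_le {M N : ℝ} (hM : 1 ≤ M) (hN : 1 ≤ N) :
    M - M⁻¹ + (N - N⁻¹) ≤ M * N - (M * N)⁻¹ := by
  have hfactor : M * N - (M * N)⁻¹ - (M - M⁻¹ + (N - N⁻¹)) =
      (M - 1) * (N - 1) * (1 - (M * N)⁻¹) := by
    have : M ≠ 0 := by positivity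
    have : N ≠ 0 := by positivity
    field_simp
    ring
  have hinv : (M * N)⁻¹ ≤ 1 := inv_le_one_of_one_le₀ (one_le_mul_of_one_le_of_one_le hM hN)
  have : 0 ≤ (M - 1) * (N - 1) * (1 - (M * N)⁻¹) :=
    mul_nonneg (mul_nonneg (sub_nonneg.mpr hM) (sub_nonneg.mpr hN)) (sub_nonneg.mpr hinv)
  linarith

/-- Complex conjugation preserves collinearity and agrees with inversion on the unit circle; so
for arguments near the unit circle the inverses are almost collinear. -/
lemma norm_collinearDet_inv_le {a b c d : ℂ} {M N : ℝ} (hM : 1 ≤ M) (hN : 1 ≤ N)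
    (ha : ‖a‖ ∈ Set.Icc M⁻¹ M) (hb : ‖b‖ ∈ Set.Icc M⁻¹ M)
    (hc : ‖c‖ ∈ Set.Icc N⁻¹ N) (hd : ‖d‖ ∈ Set.Icc N⁻¹ N) (h : collinearDet a b c d = 0) :
    ‖collinearDet a⁻¹ b⁻¹ c⁻¹ d⁻¹‖ ≤ 4 * (M * N - (M * N)⁻¹) := by
  have hM0 : 0 < M := by positivity
  have hN0 : 0 < N := by positivity
  have hsplit : collinearDet a⁻¹ b⁻¹ c⁻¹ d⁻¹ =
      ((a * d)⁻¹ - (starRingEnd ℂ) (a * d)) - ((b * c)⁻¹ - (starRingEnd ℂ) (b * c))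
      - (a⁻¹ - (starRingEnd ℂ) a) - (d⁻¹ - (starRingEnd ℂ) d)
      + (c⁻¹ - (starRingEnd ℂ) c) + (b⁻¹ - (starRingEnd ℂ) b) := by
    have hconj := congrArg (starRingEnd ℂ) h
    rw [map_collinearDet, map_zero, collinearDet] at hconj
    simp only [collinearDet, map_mul, mul_inv]
    linear_combination hconj
  have had := norm_inv_sub_conj_le (mul_pos hM0 hN0) (norm_mul_mem_Icc hM0 hN0 ha hd)
  have hbc := norm_inv_sub_conj_le (mul_pos hM0 hN0) (norm_mul_mem_Icc hM0 hN0 hb hc)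
  rw [hsplit]
  refine (norm_add_le_of_le (norm_add_le_of_le (norm_sub_le_of_le (norm_sub_le_of_le
    (norm_sub_le_of_le had hbc) (norm_inv_sub_conj_le hM0 ha)) (norm_inv_sub_conj_le hN0 hd))
    (norm_inv_sub_conj_le hN0 hc)) (norm_inv_sub_conj_le hM0 hb)).trans ?_
  linarith [sub_inv_add_sub_inv_le hM hN]

lemma four_mul_sub_inv_le {M : ℝ} (hM : 1 ≤ M) : 4 * (M - M⁻¹) ≤ Real.exp (-1) * M ^ 9 := by
  set t := Real.log M
  have hMt : M = Real.exp t := (Real.exp_log (by positivity)).symm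
  have hsub : M - M⁻¹ ≤ 2 * t * M := by
    have hexp : 1 - 2 * t ≤ Real.exp (-(2 * t)) := by linarith [Real.add_one_le_exp (-(2 * t))]
    have hinv : M⁻¹ = Real.exp (-(2 * t)) * M := by
      rw [hMt, ← Real.exp_neg, ← Real.exp_add]
      ring_nf
    rw [hinv]
    linarith [mul_le_mul_of_nonneg_right hexp (zero_le_one.trans hM)]
  have hpow : 8 * t ≤ Real.exp (-1) * M ^ 8 := by
    have : Real.exp (-1) * M ^ 8 = Real.exp (8 * t - 1) := by
      rw [hMt, ← Real.exp_nat_mul, ← Real.exp_add]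
      push_cast
      ring_nf
    rw [this]
    linarith [Real.add_one_le_exp (8 * t - 1)]
  calc 4 * (M - M⁻¹) ≤ 4 * (2 * t * M) := by gcongr
    _ = 8 * t * M := by ring
    _ ≤ Real.exp (-1) * M ^ 8 * M := by gcongr
    _ = Real.exp (-1) * M ^ 9 := by ring

variable {K : Type*} [Field K]

lemma abv_collinearDet_le_of_isNonarchimedean (v : AbsoluteValue K ℝ) (hv : IsNonarchimedean v)
    {a b c d : K} {M N : ℝ} (hM : 1 ≤ M) (hN : 1 ≤ N) (ha : v a ≤ M) (hb : v b ≤ M)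
    (hc : v c ≤ N) (hd : v d ≤ N) : v (collinearDet a b c d) ≤ M * N := by
  have hsub (x y : K) : v (x - y) ≤ max (v x) (v y) := by
    simpa only [sub_eq_add_neg, v.map_neg] using hv x (-y)
  have hsub_one {x : K} {T : ℝ} (hT : 1 ≤ T) (hx : v x ≤ T) : v (x - 1) ≤ T :=
    (hsub x 1).trans (max_le hx (by rwa [v.map_one]))
  have hmul {x y : K} (hx : v x ≤ M) (hy : v y ≤ N) : v ((x - 1) * (y - 1)) ≤ M * N := by
    rw [v.map_mul]
    have := hsub_one hM hx
    have := hsub_one hN hy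
    gcongr
  refine (hsub _ _).trans (max_le (hmul ha hd) ?_)
  rw [mul_comm]
  exact hmul hb hc

/-- The ratios of the coordinates of the projective point attached to a pair. -/
def ratioTable (p : Kˣ × Kˣ) : Fin 3 × Fin 3 → K :=
  fun t ↦ projPoint p t.1 * projPoint p⁻¹ t.2

lemma ratioTable_ne_zero (p : Kˣ × Kˣ) : ratioTable p ≠ 0 :=
  mul_tensor_ne_zero (projPoint_ne_zero p) (projPoint_ne_zero p⁻¹)

lemma abv_ratioTable_le (v : AbsoluteValue K ℝ) (p : Kˣ × Kˣ) (t : Fin 3 × Fin 3) :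
    v (ratioTable p t) ≤ ⨆ t, v (ratioTable p t) :=
  Finite.le_ciSup (fun t ↦ v (ratioTable p t)) t

lemma one_le_iSup_abv_ratioTable (v : AbsoluteValue K ℝ) (p : Kˣ × Kˣ) :
    1 ≤ ⨆ t, v (ratioTable p t) := by
  simpa [ratioTable, projPoint] using abv_ratioTable_le v p (0, 0)

lemma abv_mem_Icc_iSup_abv_ratioTable (v : AbsoluteValue K ℝ) (p : Kˣ × Kˣ) :
    v p.1 ∈ Set.Icc (⨆ t, v (ratioTable p t))⁻¹ (⨆ t, v (ratioTable p t)) ∧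
      v p.2 ∈ Set.Icc (⨆ t, v (ratioTable p t))⁻¹ (⨆ t, v (ratioTable p t)) := by
  have hpos (x : Kˣ) : 0 < v x := v.pos x.ne_zero
  refine ⟨⟨inv_le_of_inv_le₀ (hpos _) ?_, ?_⟩, ⟨inv_le_of_inv_le₀ (hpos _) ?_, ?_⟩⟩
  · simpa [ratioTable, projPoint] using abv_ratioTable_le v p (0, 1)
  · simpa [ratioTable, projPoint] using abv_ratioTable_le v p (1, 0)
  · simpa [ratioTable, projPoint] using abv_ratioTable_le v p (0, 2)
  · simpa [ratioTable, projPoint] using abv_ratioTable_le v p (2, 0)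

lemma logHeight_ratioTable [AdmissibleAbsValues K] (p : Kˣ × Kˣ) :
    logHeight (ratioTable p) = pairNorm p :=
  logHeight_fun_mul_eq (projPoint_ne_zero p) (projPoint_ne_zero p⁻¹)

lemma iSup_abv_mul_ratioTable (v : AbsoluteValue K ℝ) (p q : Kˣ × Kˣ) :
    ⨆ t : (Fin 3 × Fin 3) × (Fin 3 × Fin 3), v (ratioTable p t.1 * ratioTable q t.2) =
      (⨆ t, v (ratioTable p t)) * ⨆ t, v (ratioTable q t) :=
  Real.iSup_fun_mul_eq_iSup_mul_iSup_of_nonneg v _ _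

lemma totalWeight_le_of_collinearDet [NumberField K] {p q : Kˣ × Kˣ}
    (h : collinearDet (p.1 : K) p.2 q.1 q.2 = 0)
    (hinv : collinearDet (p.1 : K)⁻¹ (p.2 : K)⁻¹ (q.1 : K)⁻¹ (q.2 : K)⁻¹ ≠ 0) :
    (totalWeight K : ℝ) ≤ 9 * (pairNorm p + pairNorm q) := by
  have hone (v : AbsoluteValue K ℝ) (r : Kˣ × Kˣ) := one_le_iSup_abv_ratioTable v r
  have hmem (v : AbsoluteValue K ℝ) (r : Kˣ × Kˣ) := abv_mem_Icc_iSup_abv_ratioTable v r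
  have hlocal := logHeight_le_of_local (x := fun _ : Fin 1 ↦
      collinearDet (p.1 : K)⁻¹ (p.2 : K)⁻¹ (q.1 : K)⁻¹ (q.2 : K)⁻¹) (ne_iff.mpr ⟨0, hinv⟩)
    (mul_tensor_ne_zero (ratioTable_ne_zero p) (ratioTable_ne_zero q)) 9 (Real.exp_pos (-1)) ?_ ?_
  · rw [logHeight_eq_zero_of_subsingleton, Real.log_exp,
      logHeight_fun_mul_eq (ratioTable_ne_zero p) (ratioTable_ne_zero q), logHeight_ratioTable,
      logHeight_ratioTable] at hlocal
    push_cast at hlocal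
    linarith
  · intro v hv _
    obtain ⟨φ, hφ⟩ : IsInfinitePlace v := NumberField.mem_multisetInfinitePlace.mp hv
    have hvφ (x : K) : v x = ‖φ x‖ := by rw [← hφ]; rfl
    rw [iSup_abv_mul_ratioTable]
    refine le_trans ?_ (four_mul_sub_inv_le
      (one_le_mul_of_one_le_of_one_le (hone v p) (hone v q)))
    have hp := hmem v p
    have hq := hmem v q
    simp only [hvφ p.1, hvφ p.2, hvφ q.1, hvφ q.2] at hp hq
    rw [hvφ, map_collinearDet]
    simp only [map_inv₀]
    exact norm_collinearDet_inv_le (hone v p) (hone v q) hp.1 hp.2 hq.1 hq.2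
      (by rw [← map_collinearDet, h, map_zero])
  · intro v hv _
    rw [iSup_abv_mul_ratioTable]
    have hinv_le {x : K} {S : ℝ} (hS : 1 ≤ S) (hx : S⁻¹ ≤ v x) : v x⁻¹ ≤ S := by
      rw [map_inv₀]
      exact inv_le_of_inv_le₀ (by positivity) hx
    refine (abv_collinearDet_le_of_isNonarchimedean v (isNonarchimedean v hv) (hone v p) (hone v q)
      (hinv_le (hone v p) (hmem v p).1.1) (hinv_le (hone v p) (hmem v p).2.1)
      (hinv_le (hone v q) (hmem v q).1.1) (hinv_le (hone v q) (hmem v q).2.1)).trans ?_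
    exact le_self_pow₀ (one_le_mul_of_one_le_of_one_le (hone v p) (hone v q)) (by norm_num)

lemma IsUnitSolution.snd_eq {u : Kˣ × Kˣ} (hu : IsUnitSolution u) : (u.2 : K) = 1 - u.1 :=
  eq_sub_of_add_eq' hu

lemma IsUnitSolution.fst_ne_fst {u v : Kˣ × Kˣ} (hu : IsUnitSolution u) (hv : IsUnitSolution v)
    (huv : u ≠ v) : (u.1 : K) ≠ v.1 := fun h ↦
  huv (Prod.ext (Units.ext h) (Units.ext (by rw [hu.snd_eq, hv.snd_eq, h])))

lemma collinearDet_div_eq_zero {p q s : Kˣ × Kˣ} (hp : IsUnitSolution p) (hq : IsUnitSolution q)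
    (hs : IsUnitSolution s) :
    collinearDet ((q / p).1 : K) (q / p).2 (s / p).1 (s / p).2 = 0 := by
  have := p.1.ne_zero
  have := p.2.ne_zero
  simp only [collinearDet, Prod.fst_div, Prod.snd_div, Units.val_div_eq_div_val]
  field_simp
  rw [hp.snd_eq, hq.snd_eq, hs.snd_eq]
  ring

lemma collinearDet_inv_div_ne_zero {p q s : Kˣ × Kˣ} (hp : IsUnitSolution p)
    (hq : IsUnitSolution q) (hs : IsUnitSolution s) (hpq : p ≠ q) (hps : p ≠ s) (hqs : q ≠ s) :
    collinearDet ((q / p).1 : K)⁻¹ ((q / p).2 : K)⁻¹ ((s / p).1 : K)⁻¹ ((s / p).2 : K)⁻¹ ≠ 0 := by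
  have hvandermonde :
      collinearDet ((q / p).1 : K)⁻¹ ((q / p).2 : K)⁻¹ ((s / p).1 : K)⁻¹ ((s / p).2 : K)⁻¹ *
        (q.1 * q.2 * s.1 * s.2) = ((p.1 : K) - q.1) * (s.1 - p.1) * (s.1 - q.1) := by
    have := q.1.ne_zero
    have := q.2.ne_zero
    have := s.1.ne_zero
    have := s.2.ne_zero
    simp only [collinearDet, Prod.fst_div, Prod.snd_div, Units.val_div_eq_div_val, inv_div]
    field_simp
    rw [hp.snd_eq, hq.snd_eq, hs.snd_eq]
    ring
  refine left_ne_zero_of_mul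
    (hvandermonde.trans_ne (mul_ne_zero (mul_ne_zero ?_ ?_) ?_))
  · exact sub_ne_zero.mpr (hp.fst_ne_fst hq hpq)
  · exact sub_ne_zero.mpr (hs.fst_ne_fst hp hps.symm)
  · exact sub_ne_zero.mpr (hs.fst_ne_fst hq hqs.symm)

lemma totalWeight_le_of_three_solutions [NumberField K] {p q s : Kˣ × Kˣ} (hp : IsUnitSolution p)
    (hq : IsUnitSolution q) (hs : IsUnitSolution s) (hpq : p ≠ q) (hps : p ≠ s) (hqs : q ≠ s) :
    (totalWeight K : ℝ) ≤ 9 * (pairNorm (q / p) + pairNorm (s / p)) :=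
  totalWeight_le_of_collinearDet (collinearDet_div_eq_zero hp hq hs)
    (collinearDet_inv_div_ne_zero hp hq hs hpq hps hqs)

end ThreeSolutions

section LargeSolutions

open Height Height.AdmissibleAbsValues

variable {K : Type*} [Field K] [AdmissibleAbsValues K] {u v w : Kˣ × Kˣ} {X : ℝ} {l m n k : ℕ}

lemma mul_pairHeight_div_pow_le_of_le (u v : Kˣ × Kˣ) (h : k * m ≤ l) :
    m * pairHeight (v / u ^ k) ≤
      pairHeight (v ^ m / u ^ l) + (l * pairHeight u - k * m * pairHeight u) := by
  obtain ⟨j, rfl⟩ := Nat.exists_eq_add_of_le h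
  have hpow : (v / u ^ k) ^ m = v ^ m / u ^ (k * m + j) * u ^ j := by
    rw [div_pow, ← pow_mul, pow_add, ← div_div, div_mul_cancel]
  have := pairHeight_mul_le (v ^ m / u ^ (k * m + j)) (u ^ j)
  rw [← hpow, pairHeight_pow, pairHeight_pow] at this
  push_cast
  linarith

lemma mul_pairHeight_div_pow_le_of_ge (u v : Kˣ × Kˣ) (h : l ≤ k * m) :
    m * pairHeight (v / u ^ k) ≤
      pairHeight (v ^ m / u ^ l) + 2 * (k * m * pairHeight u - l * pairHeight u) := by
  obtain ⟨j, hj⟩ := Nat.exists_eq_add_of_le h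
  have hpow : (v / u ^ k) ^ m = v ^ m / u ^ l * u⁻¹ ^ j := by
    rw [div_pow, ← pow_mul, hj, pow_add, ← div_div, inv_pow, div_eq_mul_inv (v ^ m / u ^ l)]
  have hmul := pairHeight_mul_le (v ^ m / u ^ l) (u⁻¹ ^ j)
  rw [← hpow, pairHeight_pow, pairHeight_pow] at hmul
  have hinv : j * pairHeight u⁻¹ ≤ j * (2 * pairHeight u) := by
    gcongr
    exact pairHeight_inv_le u
  have hcast : (k * m : ℝ) = l + j := mod_cast hj
  rw [hcast]
  linarith

lemma mul_pairNorm_div_le (u v : Kˣ × Kˣ) (h : m ≤ l) :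
    m * pairNorm (v / u) ≤
      pairNorm (v ^ m / u ^ l) + 3 * (l * pairHeight u - m * pairHeight u) := by
  obtain ⟨j, rfl⟩ := Nat.exists_eq_add_of_le h
  have hpow : (v / u) ^ m = v ^ m / u ^ (m + j) * u ^ j := by
    rw [div_pow, pow_add, ← div_div, div_mul_cancel]
  have hmul := map_mul_le_add pairNorm (v ^ m / u ^ (m + j)) (u ^ j)
  rw [← hpow, pairNorm_pow, pairNorm_pow] at hmul
  have hj : j * pairNorm u ≤ j * (3 * pairHeight u) := by
    gcongr
    exact pairNorm_le u
  push_cast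
  linarith

/-- A solution of large height together with an exponent `m` for which `u ^ m` has height just
below the common target `X`. Comparing these powers makes all large solutions comparable in
size. -/
structure IsNormalizedSolution (X : ℝ) (u : Kˣ × Kˣ) (m : ℕ) : Prop where
  isUnitSolution : IsUnitSolution u
  le_pairHeight : 67 * totalWeight K ≤ pairHeight u
  target_pos : 0 < X
  le_mul_pairHeight : 0.9999 * X ≤ m * pairHeight u
  mul_pairHeight_le : m * pairHeight u ≤ X

namespace IsNormalizedSolution

lemma exponent_pos (hu : IsNormalizedSolution X u m) : 0 < (m : ℝ) := by
  have := hu.target_pos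
  exact pos_of_mul_pos_left ((by positivity : 0 < 0.9999 * X).trans_le hu.le_mul_pairHeight)
    (pairHeight_nonneg u)

lemma pairHeight_pos (hu : IsNormalizedSolution X u m) : 0 < pairHeight u := by
  have := hu.target_pos
  exact pos_of_mul_pos_right ((by positivity : 0 < 0.9999 * X).trans_le hu.le_mul_pairHeight)
    m.cast_nonneg

lemma totalWeight_mul_log_two_le (hu : IsNormalizedSolution X u m) :
    totalWeight K * Real.log 2 ≤ 0.0104 * pairHeight u := by
  have : totalWeight K * Real.log 2 ≤ totalWeight K * 0.6931471808 := by
    gcongr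
    exact Real.log_two_lt_d9.le
  linarith [hu.le_pairHeight, (totalWeight K).cast_nonneg (α := ℝ)]

/-- If `u ^ m` and `v ^ n` are close, the Padé inequality keeps `n * h(u) / X` away from every
`1 / (2 * j)`. -/
lemma mul_pairHeight_gap [CharZero K] (hu : IsNormalizedSolution X u m)
    (hv : IsUnitSolution v) (hclose : pairNorm (v ^ n / u ^ m) ≤ X / 20) {j : ℕ} (hj : j ≠ 0) :
    j * (n * pairHeight u) ≤ 0.3575 * X ∨ 0.6366 * X ≤ j * (n * pairHeight u) := by
  have hpade : 15 / 16 * (j * (n * pairHeight u)) ≤ n * pairHeight (v / u ^ (2 * j)) := by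
    have hlog : j * (totalWeight K * Real.log 2) ≤ j * (0.0104 * pairHeight u) :=
      mul_le_mul_of_nonneg_left hu.totalWeight_mul_log_two_le j.cast_nonneg
    have : 0 ≤ j * pairHeight u := mul_nonneg j.cast_nonneg (pairHeight_nonneg u)
    have : 15 / 16 * (j * pairHeight u) ≤ pairHeight (v / u ^ (2 * j)) := by
      linarith [mul_pairHeight_le_add_pairHeight_div_pow hu.isUnitSolution hv hj]
    calc _ = n * (15 / 16 * (j * pairHeight u)) := by ring
      _ ≤ _ := by gcongr
  have hheight := (pairHeight_le_pairNorm _).trans hclose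
  have hcast : ((2 * j : ℕ) * n * pairHeight u : ℝ) = 2 * (j * (n * pairHeight u)) := by
    push_cast
    ring
  rcases le_total (2 * j * n) m with h | h
  · left
    linarith [mul_pairHeight_div_pow_le_of_le u v h, hu.mul_pairHeight_le, hu.target_pos]
  · right
    linarith [mul_pairHeight_div_pow_le_of_ge u v h, hu.le_mul_pairHeight, hu.target_pos]

lemma mul_pairHeight_le_of_le (hu : IsNormalizedSolution X u m) (hv : IsNormalizedSolution X v n)
    (huv : u ≠ v) (hnm : n ≤ m) (hclose : pairNorm (v ^ n / u ^ m) ≤ X / 20) :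
    n * pairHeight u ≤ 0.516 * X := by
  have hsum : n * (0.9792 * pairHeight u + pairHeight v) ≤ n * pairNorm (v / u) := by
    gcongr
    linarith [pairHeight_add_pairHeight_le hu.isUnitSolution hv.isUnitSolution huv,
      hu.totalWeight_mul_log_two_le]
  linarith [mul_pairNorm_div_le u v hnm, hu.mul_pairHeight_le, hv.le_mul_pairHeight,
    hu.target_pos]

end IsNormalizedSolution

/-- The least multiple of `t` exceeding `0.36` would fall into the gap if `t` were small. -/
lemma mem_Icc_of_forall_multiple_gap {t : ℝ} (ht0 : 0 < t) (ht : t ≤ 0.516)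
    (hgap : ∀ n : ℕ, n ≠ 0 → n * t ≤ 0.3575 ∨ 0.6366 ≤ n * t) : t ∈ Set.Icc 0.318 0.3575 := by
  have hone := hgap 1 one_ne_zero
  have htwo := hgap 2 two_ne_zero
  push_cast at hone htwo
  have hupper : t ≤ 0.3575 := by rcases hone with h | h <;> linarith
  refine ⟨?_, hupper⟩
  by_contra! hlower
  have hdouble : 2 * t ≤ 0.3575 := htwo.resolve_right (by linarith)
  have hlt := (div_lt_iff₀ ht0).mp (Nat.lt_floor_add_one (0.36 / t))
  have hle := (le_div_iff₀ ht0).mp (Nat.floor_le (show 0 ≤ 0.36 / t by positivity))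
  have hmultiple := hgap (⌊0.36 / t⌋₊ + 1) (Nat.succ_ne_zero _)
  push_cast at hmultiple
  rcases hmultiple with h | h <;> linarith

namespace IsNormalizedSolution

lemma mul_pairHeight_mem_Icc [CharZero K] (hu : IsNormalizedSolution X u m)
    (hv : IsNormalizedSolution X v n) (huv : u ≠ v) (hnm : n ≤ m)
    (hclose : pairNorm (v ^ n / u ^ m) ≤ X / 20) :
    n * pairHeight u ∈ Set.Icc (0.318 * X) (0.3575 * X) := by
  have hX := hu.target_pos
  have := mem_Icc_of_forall_multiple_gap (t := n * pairHeight u / X)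
    (div_pos (mul_pos hv.exponent_pos hu.pairHeight_pos) hX)
    ((div_le_iff₀ hX).mpr (hu.mul_pairHeight_le_of_le hv huv hnm hclose)) fun j hj ↦ by
      rw [← mul_div_assoc, div_le_iff₀ hX, le_div_iff₀ hX]
      exact hu.mul_pairHeight_gap hv.isUnitSolution hclose hj
  rwa [Set.mem_Icc, le_div_iff₀ hX, div_le_iff₀ hX] at this

/-- As `m * h(v)` is almost `X`, the quotient `n * h(u) / X` is almost the product of
`m * h(u) / X` and `n * h(v) / X`; but all three lie near `1 / 3`. -/
lemma false_of_close_of_le [CharZero K] (hu : IsNormalizedSolution X u l)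
    (hv : IsNormalizedSolution X v m) (hw : IsNormalizedSolution X w n) (huv : u ≠ v)
    (huw : u ≠ w) (hvw : v ≠ w) (hml : m ≤ l) (hnm : n ≤ m)
    (hclose_uv : pairNorm (v ^ m / u ^ l) ≤ X / 20) (hclose_uw : pairNorm (w ^ n / u ^ l) ≤ X / 20)
    (hclose_vw : pairNorm (w ^ n / v ^ m) ≤ X / 20) : False := by
  have hX := hu.target_pos
  have hmu := hu.mul_pairHeight_mem_Icc hv huv hml hclose_uv
  have hnu := hu.mul_pairHeight_mem_Icc hw huw (hnm.trans hml) hclose_uw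
  have hnv := hv.mul_pairHeight_mem_Icc hw hvw hnm hclose_vw
  have hmv := hv.le_mul_pairHeight
  have hv0 := pairHeight_nonneg v
  have : 0.9999 * X * (0.318 * X) ≤ 0.3575 * X * (0.3575 * X) := calc
    _ ≤ m * pairHeight v * (n * pairHeight u) :=
      mul_le_mul hmv hnu.1 (by positivity) (by positivity)
    _ = m * pairHeight u * (n * pairHeight v) := by ring
    _ ≤ _ := mul_le_mul hmu.2 hnv.2 (by positivity) (by positivity)
  nlinarith [mul_pos hX hX]

lemma false_of_close [CharZero K] (hu : IsNormalizedSolution X u l)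
    (hv : IsNormalizedSolution X v m) (hw : IsNormalizedSolution X w n) (huv : u ≠ v)
    (huw : u ≠ w) (hvw : v ≠ w) (hclose_uv : pairNorm (v ^ m / u ^ l) ≤ X / 20)
    (hclose_uw : pairNorm (w ^ n / u ^ l) ≤ X / 20)
    (hclose_vw : pairNorm (w ^ n / v ^ m) ≤ X / 20) : False := by
  have hsymm {x y : Kˣ × Kˣ} (h : pairNorm (x / y) ≤ X / 20) : pairNorm (y / x) ≤ X / 20 := by
    rwa [← map_inv_eq_map, inv_div]
  wlog hml : m ≤ l generalizing u v l m
  · exact this hv hu huv.symm hvw huw (hsymm hclose_uv) hclose_vw hclose_uw (le_of_not_ge hml)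
  wlog hnm : n ≤ m generalizing u v w l m n
  · rcases le_total n l with hnl | hln
    · exact this hv hu hw huw huv hvw.symm hclose_uw hclose_uv (hsymm hclose_vw) hnl
        (le_of_not_ge hnm)
    · exact this hv hw hu huw.symm hvw.symm huv (hsymm hclose_uw) (hsymm hclose_vw) hclose_uv
        hln hml
  exact hu.false_of_close_of_le hv hw huv huw hvw hml hnm hclose_uv hclose_uw hclose_vw

end IsNormalizedSolution

end LargeSolutions

section Counting

open Height Height.AdmissibleAbsValues Module

variable {K : Type*} [Field K] [NumberField K] {Γ : Subgroup (Kˣ × Kˣ)} {s : Finset Γ}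

lemma totalWeight_pos : (0 : ℝ) < totalWeight K := mod_cast NumberField.totalWeight_pos K

lemma exists_forall_isNormalizedSolution (hsol : ∀ x ∈ s, IsUnitSolution (x : Kˣ × Kˣ))
    (hs : ∀ x ∈ s, 67 * totalWeight K ≤ pairHeight (x : Kˣ × Kˣ)) :
    ∃ (X : ℝ) (m : Γ → ℕ), 0 < X ∧ ∀ x ∈ s, IsNormalizedSolution X (x : Kˣ × Kˣ) (m x) := by
  have hnonneg (x : Γ) : 0 ≤ 10000 * pairHeight (x : Kˣ × Kˣ) :=
    mul_nonneg (by norm_num) (pairHeight_nonneg _)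
  let X : ℝ := 1 + ∑ x ∈ s, 10000 * pairHeight (x : Kˣ × Kˣ)
  have hX : 0 < X := add_pos_of_pos_of_nonneg one_pos (Finset.sum_nonneg fun x _ ↦ hnonneg x)
  refine ⟨X, fun x ↦ ⌊X / pairHeight (x : Kˣ × Kˣ)⌋₊, hX, fun x hx ↦ ?_⟩
  have hpos : 0 < pairHeight (x : Kˣ × Kˣ) := by
    linarith [hs x hx, totalWeight_pos (K := K)]
  have hle : 10000 * pairHeight (x : Kˣ × Kˣ) ≤ X := by
    linarith [Finset.single_le_sum (fun x _ ↦ hnonneg x) hx]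
  have hlt := (div_lt_iff₀ hpos).mp (Nat.lt_floor_add_one (X / pairHeight (x : Kˣ × Kˣ)))
  exact ⟨hsol x hx, hs x hx, hX, by linarith,
    (le_div_iff₀ hpos).mp (Nat.floor_le (div_nonneg hX.le hpos.le))⟩

variable [Module.Finite ℚ (Rationalization Γ)]

lemma card_le_of_small_pairHeight (hsol : ∀ x ∈ s, IsUnitSolution (x : Kˣ × Kˣ))
    (hs : ∀ x ∈ s, pairHeight (x : Kˣ × Kˣ) ≤ 2.2 * totalWeight K) :
    s.card ≤ 2 * 242 ^ finrank ℚ (Rationalization Γ) := by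
  have hD := totalWeight_pos (K := K)
  refine card_le_two_mul_pow_finrank (N := pairNorm.comp Γ.subtype) (f := id)
    (B := 6.6 * totalWeight K) (δ := totalWeight K / 18) (fun m x ↦ pairNorm_pow m (x : Kˣ × Kˣ))
    (by norm_num) (by positivity) (fun x hx ↦ ?_) (by push_cast; linarith) ?_
  · refine (pairNorm_le (x : Kˣ × Kˣ)).trans ?_
    linarith [hs x hx]
  · intro x hx y hy z hz hxy hxz hyz hyx hzx
    have := totalWeight_le_of_three_solutions (hsol x hx) (hsol y hy) (hsol z hz)
      (Subtype.coe_ne_coe.mpr hxy) (Subtype.coe_ne_coe.mpr hxz) (Subtype.coe_ne_coe.mpr hyz)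
    replace hyx : pairNorm (y / x : Kˣ × Kˣ) < totalWeight K / 18 := hyx
    replace hzx : pairNorm (z / x : Kˣ × Kˣ) < totalWeight K / 18 := hzx
    linarith

lemma card_le_of_medium_pairHeight (hsol : ∀ x ∈ s, IsUnitSolution (x : Kˣ × Kˣ))
    (hlower : ∀ x ∈ s, 2.2 * totalWeight K ≤ pairHeight (x : Kˣ × Kˣ))
    (hupper : ∀ x ∈ s, pairHeight (x : Kˣ × Kˣ) ≤ 67 * totalWeight K) :
    s.card ≤ 242 ^ finrank ℚ (Rationalization Γ) := by
  have hD := totalWeight_pos (K := K)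
  have hlog : totalWeight K * Real.log 2 ≤ totalWeight K * 0.6931471808 := by
    gcongr
    exact Real.log_two_lt_d9.le
  rw [← Fintype.card_coe]
  refine card_le_pow_finrank (N := pairNorm.comp Γ.subtype) (f := fun x : s ↦ (x : Γ))
    (B := 201 * totalWeight K) (δ := 3 * totalWeight K) (fun m x ↦ pairNorm_pow m (x : Kˣ × Kˣ))
    (by norm_num) (by positivity) (fun x ↦ ?_) (fun x y hxy ↦ ?_) (by push_cast; linarith)
  · refine (pairNorm_le ((x : Γ) : Kˣ × Kˣ)).trans ?_
    linarith [hupper x x.2]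
  · have hyx : ((y : Γ) : Kˣ × Kˣ) ≠ (x : Γ) := fun h ↦ hxy (Subtype.ext (Subtype.ext h.symm))
    change _ ≤ pairNorm ((x : Γ) / (y : Γ) : Kˣ × Kˣ)
    linarith [pairHeight_add_pairHeight_le (hsol y y.2) (hsol x x.2) hyx, hlower x x.2,
      hlower y y.2]

lemma card_le_of_large_pairHeight (hsol : ∀ x ∈ s, IsUnitSolution (x : Kˣ × Kˣ))
    (hs : ∀ x ∈ s, 67 * totalWeight K ≤ pairHeight (x : Kˣ × Kˣ)) :
    s.card ≤ 2 * 242 ^ finrank ℚ (Rationalization Γ) := by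
  obtain ⟨X, m, hX, hnormalized⟩ := exists_forall_isNormalizedSolution hsol hs
  refine card_le_two_mul_pow_finrank (N := pairNorm.comp Γ.subtype) (f := fun x ↦ x ^ m x)
    (B := 3 * X) (δ := X / 40) (fun m x ↦ pairNorm_pow m (x : Kˣ × Kˣ)) (by norm_num)
    (by positivity) (fun x hx ↦ ?_) (by push_cast; linarith) ?_
  · calc pairNorm ((x : Kˣ × Kˣ) ^ m x) ≤ 3 * pairHeight ((x : Kˣ × Kˣ) ^ m x) := pairNorm_le _
      _ = 3 * (m x * pairHeight (x : Kˣ × Kˣ)) := by rw [pairHeight_pow]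
      _ ≤ 3 * X := by gcongr; exact (hnormalized x hx).mul_pairHeight_le
  · intro x hx y hy z hz hxy hxz hyz hyx hzx
    replace hyx : pairNorm ((y : Kˣ × Kˣ) ^ m y / (x : Kˣ × Kˣ) ^ m x) < X / 40 := hyx
    replace hzx : pairNorm ((z : Kˣ × Kˣ) ^ m z / (x : Kˣ × Kˣ) ^ m x) < X / 40 := hzx
    have hzy : pairNorm ((z : Kˣ × Kˣ) ^ m z / (y : Kˣ × Kˣ) ^ m y) ≤ X / 20 := by
      have := map_div_le_add pairNorm ((z : Kˣ × Kˣ) ^ m z / (x : Kˣ × Kˣ) ^ m x)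
        ((y : Kˣ × Kˣ) ^ m y / (x : Kˣ × Kˣ) ^ m x)
      rw [div_div_div_cancel_right] at this
      linarith
    exact (hnormalized x hx).false_of_close (hnormalized y hy) (hnormalized z hz)
      (Subtype.coe_ne_coe.mpr hxy) (Subtype.coe_ne_coe.mpr hxz) (Subtype.coe_ne_coe.mpr hyz)
      (by linarith) (by linarith) hzy

lemma card_unitSolutions_le (hsol : ∀ x ∈ s, IsUnitSolution (x : Kˣ × Kˣ)) :
    s.card ≤ 5 * 242 ^ finrank ℚ (Rationalization Γ) := by
  let ht (x : Γ) : ℝ := pairHeight (x : Kˣ × Kˣ)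
  let small := {x ∈ s | ht x ≤ 2.2 * totalWeight K}
  let medium := {x ∈ s | 2.2 * totalWeight K ≤ ht x ∧ ht x ≤ 67 * totalWeight K}
  let large := {x ∈ s | 67 * totalWeight K ≤ ht x}
  have hsmall : small.card ≤ 2 * 242 ^ finrank ℚ (Rationalization Γ) :=
    card_le_of_small_pairHeight (fun x hx ↦ hsol x (Finset.mem_of_mem_filter x hx))
      (fun x hx ↦ (Finset.mem_filter.mp hx).2)
  have hmedium : medium.card ≤ 242 ^ finrank ℚ (Rationalization Γ) :=
    card_le_of_medium_pairHeight (fun x hx ↦ hsol x (Finset.mem_of_mem_filter x hx))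
      (fun x hx ↦ (Finset.mem_filter.mp hx).2.1) (fun x hx ↦ (Finset.mem_filter.mp hx).2.2)
  have hlarge : large.card ≤ 2 * 242 ^ finrank ℚ (Rationalization Γ) :=
    card_le_of_large_pairHeight (fun x hx ↦ hsol x (Finset.mem_of_mem_filter x hx))
      (fun x hx ↦ (Finset.mem_filter.mp hx).2)
  have hcover : s ⊆ small ∪ (medium ∪ large) := by
    intro x hx
    simp only [small, medium, large, Finset.mem_union, Finset.mem_filter, hx, true_and]
    grind
  linarith [Finset.card_le_card hcover, Finset.card_union_le small (medium ∪ large),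
    Finset.card_union_le medium large]

lemma encard_le_of_forall_finset_card_le {α : Type*} {S : Set α} {k : ℕ}
    (h : ∀ t : Finset α, (t : Set α) ⊆ S → t.card ≤ k) : S.encard ≤ k := by
  by_contra! hlt
  obtain ⟨t, htS, ht⟩ := Set.exists_subset_encard_eq (Order.add_one_le_of_lt hlt)
  obtain ⟨t, rfl⟩ := (Set.finite_of_encard_eq_coe (k := k + 1) (mod_cast ht)).exists_finset_coe
  have hcard : t.card = k + 1 := by
    rw [Set.encard_coe_eq_coe_finsetCard] at ht
    exact_mod_cast ht
  exact (h t htS).not_gt (by lia)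

lemma encard_unitSolutions_le (Γ : Subgroup (Kˣ × Kˣ)) [Module.Finite ℚ (Rationalization Γ)] :
    {x : Γ | IsUnitSolution (x : Kˣ × Kˣ)}.encard ≤
      (5 * 242 ^ finrank ℚ (Rationalization Γ) : ℕ) :=
  encard_le_of_forall_finset_card_le fun _ ht ↦ card_unitSolutions_le fun _ hx ↦ ht hx

/-- The factor `g` is absorbed by enlarging the group by the powers of `g`. -/
lemma encard_mul_unitSolutions_le (Γ : Subgroup (Kˣ × Kˣ))
    [Module.Finite ℚ (Rationalization Γ)] (g : Kˣ × Kˣ) :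
    {u | u ∈ Γ ∧ IsUnitSolution (g * u)}.encard ≤
      (5 * 242 ^ (finrank ℚ (Rationalization Γ) + 1) : ℕ) := by
  let φ : Γ × Multiplicative ℤ →* Kˣ × Kˣ := Γ.subtype.coprod (zpowersHom _ g)
  have hφ := rationalizationMap_surjective φ.rangeRestrict_surjective
  have := Module.Finite.of_surjective _ hφ
  have hrank : finrank ℚ (Rationalization φ.range) ≤ finrank ℚ (Rationalization Γ) + 1 :=
    (LinearMap.finrank_le_finrank_of_surjective hφ).trans_eq
      (by rw [finrank_rationalization_prod, finrank_rationalization_multiplicative_int])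
  have hsub : {u | u ∈ Γ ∧ IsUnitSolution (g * u)} ⊆
      (fun x : φ.range ↦ g⁻¹ * (x : Kˣ × Kˣ)) '' {x | IsUnitSolution (x : Kˣ × Kˣ)} := by
    rintro u ⟨huΓ, hu⟩
    exact ⟨⟨g * u, (⟨u, huΓ⟩, Multiplicative.ofAdd 1), by simp [φ, mul_comm]⟩, hu,
      inv_mul_cancel_left g u⟩
  calc _ ≤ _ := Set.encard_le_encard hsub
    _ ≤ _ := Set.encard_image_le _ _
    _ ≤ _ := encard_unitSolutions_le φ.range
    _ ≤ _ := by gcongr; norm_num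

end Counting

end UnitEquation

open TensorProduct in
theorem unit_equation_bound_general {K : Type*} [Field K] [NumberField K]
    (Γ : Subgroup (Kˣ × Kˣ)) (hfin : Module.Finite ℚ (ℚ ⊗[ℤ] Additive Γ))
    {a b : K} (ha : a ≠ 0) (hb : b ≠ 0) :
    {p : K × K | (∃ u ∈ Γ, (u.1 : K) = p.1 ∧ (u.2 : K) = p.2) ∧ a * p.1 + b * p.2 = 1}.Finite ∧
      {p : K × K | (∃ u ∈ Γ, (u.1 : K) = p.1 ∧ (u.2 : K) = p.2) ∧
        a * p.1 + b * p.2 = 1}.ncard ≤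
          5 * 242 ^ (Module.finrank ℚ (ℚ ⊗[ℤ] Additive Γ) + 1) := by
  rw [← Set.encard_le_coe_iff_finite_ncard_le]
  refine le_trans ?_ (UnitEquation.encard_mul_unitSolutions_le Γ (Units.mk0 a ha, Units.mk0 b hb))
  refine (Set.encard_le_encard ?_).trans
    (Set.encard_image_le (fun u : Kˣ × Kˣ ↦ ((u.1 : K), (u.2 : K))) _)
  rintro ⟨_, _⟩ ⟨⟨u, huΓ, rfl, rfl⟩, hu⟩
  exact ⟨u, ⟨huΓ, hu⟩, rfl⟩

open TensorProduct in
/-- **Corollary (Beukers–Schlickewei).** Let `Γ₀` be a subgroup of `K*` of finite rank `r`,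
`Γ = Γ₀ × Γ₀`, and `a, b ∈ K*`. Then the equation `a·x + b·y = 1` has at most `2^{8(2r+2)}`
solutions with `(x, y) ∈ Γ`. -/
theorem unit_equation_bound
    {K : Type*} [Field K] [NumberField K]
    (Γ₀ : Subgroup Kˣ) (r : ℕ)
    (hfin : Module.Finite ℚ (ℚ ⊗[ℤ] (Additive ↥Γ₀)))
    (hr : Module.finrank ℚ (ℚ ⊗[ℤ] (Additive ↥Γ₀)) = r)
    (a b : K) (ha : a ≠ 0) (hb : b ≠ 0) :
    {p : K × K | (∃ u ∈ Γ₀, ((u : Kˣ) : K) = p.1) ∧ (∃ w ∈ Γ₀, ((w : Kˣ) : K) = p.2) ∧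
        a * p.1 + b * p.2 = 1}.Finite ∧
      {p : K × K | (∃ u ∈ Γ₀, ((u : Kˣ) : K) = p.1) ∧ (∃ w ∈ Γ₀, ((w : Kˣ) : K) = p.2) ∧
        a * p.1 + b * p.2 = 1}.ncard ≤ 2 ^ (8 * (2 * r + 2)) := by
  obtain ⟨hfinite, hncard⟩ := unit_equation_bound_general (Γ₀.prod Γ₀)
    (UnitEquation.finite_rationalization_subgroup_prod Γ₀ Γ₀) ha hb
  rw [UnitEquation.finrank_rationalization_subgroup_prod, hr, ← two_mul] at hncard
  have hset : {p : K × K | (∃ u ∈ Γ₀.prod Γ₀, (u.1 : K) = p.1 ∧ (u.2 : K) = p.2) ∧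
      a * p.1 + b * p.2 = 1} = {p : K × K | (∃ u ∈ Γ₀, ((u : Kˣ) : K) = p.1) ∧
        (∃ w ∈ Γ₀, ((w : Kˣ) : K) = p.2) ∧ a * p.1 + b * p.2 = 1} := by
    ext p
    simp only [Subgroup.mem_prod, Prod.exists, Set.mem_ofPred_eq]
    grind
  rw [hset] at hfinite hncard
  refine ⟨hfinite, hncard.trans ?_⟩
  calc 5 * 242 ^ (2 * r + 1) ≤ 256 * 256 ^ (2 * r + 1) := by gcongr <;> norm_num
    _ = 2 ^ (8 * (2 * r + 2)) := by rw [pow_mul, ← pow_succ']; norm_num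
end

section
/- For all points P₁, P₂, P₃ ∈ ℙ¹(K) and every nonzero prime ideal 𝔭 of the ring of integers of a number field K, the 𝔭-adic logarithmic distance satisfies δ_𝔭(P₁,P₃) ≥ min{ δ_𝔭(P₁,P₂), δ_𝔭(P₂,P₃) }. -/
open NumberField IsDedekindDomain MvPolynomial
open scoped Classical nonZeroDivisors

set_option synthInstance.maxHeartbeats 1000000
set_option maxHeartbeats 1000000

/-! On coordinate vectors consider the chordal distance
`|x₁y₂ - x₂y₁| / (max(|x₁|, |x₂|) max(|y₁|, |y₂|))`; the logarithmic distance is minus its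
logarithm, so the claim says that the chordal distance is ultrametric. Writing `x ∧ y` for the
`2 × 2` determinant, this follows from the Plücker relation
`(x ∧ z) yᵢ = (x ∧ y) zᵢ + (y ∧ z) xᵢ`, taken at the coordinate `i` where `|yᵢ|` is largest. -/

section ChordalDistance

variable {R Γ₀ : Type*} [CommRing R] [LinearOrderedCommGroupWithZero Γ₀]

/-- The `2 × 2` determinant `x ∧ y` of two vectors; for coordinates of points of the projective
line it vanishes exactly when the points coincide. -/
def wedge (x y : Fin 2 → R) : R := x 0 * y 1 - x 1 * y 0

/-- The sup norm of a vector with respect to a (multiplicative) valuation. -/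
def maxVal (w : Valuation R Γ₀) (x : Fin 2 → R) : Γ₀ := max (w (x 0)) (w (x 1))

/-- The chordal distance on the projective line, as a function of homogeneous coordinates. It is
meaningful when neither vector has sup norm `0`, and has the junk value `0` otherwise. -/
def chordalDist (w : Valuation R Γ₀) (x y : Fin 2 → R) : Γ₀ :=
  w (wedge x y) / (maxVal w x * maxVal w y)

theorem wedge_mul_apply (x y z : Fin 2 → R) (i : Fin 2) :
    wedge x z * y i = wedge x y * z i + wedge y z * x i := by
  fin_cases i <;> simp only [wedge, Fin.zero_eta, Fin.mk_one] <;> ring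

variable (w : Valuation R Γ₀)

theorem val_apply_le_maxVal (x : Fin 2 → R) (i : Fin 2) : w (x i) ≤ maxVal w x := by
  fin_cases i
  exacts [le_max_left _ _, le_max_right _ _]

theorem exists_maxVal_eq (x : Fin 2 → R) : ∃ i, maxVal w x = w (x i) :=
  (max_choice (w (x 0)) (w (x 1))).elim (⟨0, ·⟩) (⟨1, ·⟩)

theorem val_wedge_mul_maxVal_le (x y z : Fin 2 → R) :
    w (wedge x z) * maxVal w y ≤
      max (w (wedge x y) * maxVal w z) (w (wedge y z) * maxVal w x) := by
  obtain ⟨i, hi⟩ := exists_maxVal_eq w y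
  calc w (wedge x z) * maxVal w y
      = w (wedge x y * z i + wedge y z * x i) := by rw [hi, ← map_mul, wedge_mul_apply]
    _ ≤ max (w (wedge x y) * w (z i)) (w (wedge y z) * w (x i)) := by
        simpa only [map_mul] using w.map_add (wedge x y * z i) (wedge y z * x i)
    _ ≤ max (w (wedge x y) * maxVal w z) (w (wedge y z) * maxVal w x) := by
        gcongr <;> exact val_apply_le_maxVal w _ i

variable {w} in
theorem chordalDist_le_max {x y z : Fin 2 → R}
    (hx : maxVal w x ≠ 0) (hy : maxVal w y ≠ 0) (hz : maxVal w z ≠ 0) :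
    chordalDist w x z ≤ max (chordalDist w x y) (chordalDist w y z) := by
  rw [← zero_lt_iff] at hx hy hz
  rw [chordalDist, chordalDist, chordalDist, le_max_iff,
    div_le_div_iff₀ (by positivity) (by positivity),
    div_le_div_iff₀ (by positivity) (by positivity)]
  refine (le_max_iff.mp (val_wedge_mul_maxVal_le w x y z)).imp (fun h ↦ ?_) fun h ↦ ?_
  · calc w (wedge x z) * (maxVal w x * maxVal w y)
        = maxVal w x * (w (wedge x z) * maxVal w y) := mul_left_comm ..
      _ ≤ maxVal w x * (w (wedge x y) * maxVal w z) := by gcongr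
      _ = w (wedge x y) * (maxVal w x * maxVal w z) := mul_left_comm ..
  · calc w (wedge x z) * (maxVal w y * maxVal w z)
        = w (wedge x z) * maxVal w y * maxVal w z := (mul_assoc ..).symm
      _ ≤ w (wedge y z) * maxVal w x * maxVal w z := by gcongr
      _ = w (wedge y z) * (maxVal w x * maxVal w z) := mul_assoc ..

end ChordalDistance

section ProjectiveLine

variable {K Γ₀ : Type*} [Field K] [LinearOrderedCommGroupWithZero Γ₀]

theorem maxVal_eq_zero_iff (w : Valuation K Γ₀) {x : Fin 2 → K} : maxVal w x = 0 ↔ x = 0 := by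
  rw [← le_zero_iff]
  simp [maxVal, funext_iff]

theorem maxVal_rep_ne_zero (w : Valuation K Γ₀) (P : P1 K) : maxVal w P.rep ≠ 0 :=
  (maxVal_eq_zero_iff w).not.mpr P.rep_nonzero

theorem wedge_rep_eq_zero_iff {P Q : P1 K} : wedge P.rep Q.rep = 0 ↔ P = Q := by
  have det_eq : wedge P.rep Q.rep = (Matrix.of ![P.rep, Q.rep]).det := by
    simp [wedge, Matrix.det_fin_two]
  have rows_eq : (Matrix.of ![P.rep, Q.rep]).row = Projectivization.rep ∘ ![P, Q] := by
    ext i : 1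
    fin_cases i <;> rfl
  rw [← not_iff_not, ← Ne, ← Ne, ← Projectivization.independent_pair_iff_ne,
    Projectivization.independent_iff, det_eq, ← rows_eq, Matrix.linearIndependent_rows_iff_isUnit,
    Matrix.isUnit_iff_isUnit_det, isUnit_iff_ne_zero]

theorem chordalDist_rep_eq_zero_iff (w : Valuation K Γ₀) {P Q : P1 K} :
    chordalDist w P.rep Q.rep = 0 ↔ P = Q := by
  simp [chordalDist, maxVal_rep_ne_zero, wedge_rep_eq_zero_iff]

end ProjectiveLine

section LogarithmicDistance

variable {K : Type*} [Field K] [NumberField K] (v : HeightOneSpectrum (𝓞 K))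

theorem ordAt_eq_neg_log (x : K) : ordAt v x = -WithZero.log (v.valuation K x) := by
  rw [ordAt]
  split_ifs with hx
  · simp [hx]
  · conv_rhs => rw [← WithZero.coe_unzero ((v.valuation K).ne_zero_iff.mpr hx)]
    rfl

theorem minOrd_eq_neg_log (x : Fin 2 → K) :
    minOrd v (x 0) (x 1) = -WithZero.log (maxVal (v.valuation K) x) := by
  rw [minOrd, maxVal, ordAt_eq_neg_log, ordAt_eq_neg_log]
  split_ifs with h₀ h₁
  · simp [h₀]
  · simp [h₁]
  · have log_le_log {a b : K} (ha : a ≠ 0) (hb : b ≠ 0) :=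
      WithZero.log_le_log ((v.valuation K).ne_zero_iff.mpr ha) ((v.valuation K).ne_zero_iff.mpr hb)
    rw [min_neg_neg, neg_inj]
    rcases le_total (v.valuation K (x 0)) (v.valuation K (x 1)) with h | h
    · rw [max_eq_right h, max_eq_right ((log_le_log h₀ h₁).mpr h)]
    · rw [max_eq_left h, max_eq_left ((log_le_log h₁ h₀).mpr h)]

theorem logDist_self (P : P1 K) : logDist v P P = ⊤ := if_pos rfl

variable {v}

theorem logDist_of_ne {P Q : P1 K} (h : P ≠ Q) :
    logDist v P Q = ↑(-WithZero.log (chordalDist (v.valuation K) P.rep Q.rep)) := by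
  have hP := maxVal_rep_ne_zero (v.valuation K) P
  have hQ := maxVal_rep_ne_zero (v.valuation K) Q
  have hPQ := (v.valuation K).ne_zero_iff.mpr (wedge_rep_eq_zero_iff.not.mpr h)
  rw [logDist, if_neg h, ← wedge, ordAt_eq_neg_log, minOrd_eq_neg_log, minOrd_eq_neg_log,
    chordalDist, WithZero.log_div hPQ (mul_ne_zero hP hQ), WithZero.log_mul hP hQ]
  congr 1
  ring

theorem logDist_le_logDist_iff {P Q P' Q' : P1 K} :
    logDist v P Q ≤ logDist v P' Q' ↔
      chordalDist (v.valuation K) P'.rep Q'.rep ≤ chordalDist (v.valuation K) P.rep Q.rep := by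
  rcases eq_or_ne P' Q' with rfl | h'
  · simp [logDist_self, (chordalDist_rep_eq_zero_iff (v.valuation K)).mpr rfl]
  rcases eq_or_ne P Q with rfl | h
  · simp [logDist_self, logDist_of_ne h', (chordalDist_rep_eq_zero_iff (v.valuation K)).mpr rfl,
      chordalDist_rep_eq_zero_iff, h']
  · rw [logDist_of_ne h, logDist_of_ne h', WithTop.coe_le_coe, neg_le_neg_iff,
      WithZero.log_le_log ((chordalDist_rep_eq_zero_iff _).not.mpr h')
        ((chordalDist_rep_eq_zero_iff _).not.mpr h)]

end LogarithmicDistance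

/-- **Proposition (triangle inequality for the logarithmic distance).**
For all `P₁, P₂, P₃ ∈ ℙ¹(K)` and every nonzero prime `𝔭` of the ring of integers of `K`,
`δ_𝔭(P₁,P₃) ≥ min{δ_𝔭(P₁,P₂), δ_𝔭(P₂,P₃)}`. -/
theorem logDist_triangle
    {K : Type*} [Field K] [NumberField K]
    (v : HeightOneSpectrum (𝓞 K)) (P₁ P₂ P₃ : P1 K) :
    min (logDist v P₁ P₂) (logDist v P₂ P₃) ≤ logDist v P₁ P₃ := by
  simp only [min_le_iff, logDist_le_logDist_iff, ← le_max_iff]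
  exact chordalDist_le_max (maxVal_rep_ne_zero _ P₁) (maxVal_rep_ne_zero _ P₂)
    (maxVal_rep_ne_zero _ P₃)
end
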